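/- arXiv:1008.0156 — 3 statements merged into one kernel-verified Lean document; each statement's English description precedes it below -/
import Mathlib

section
/- Let S be a standard graded k-algebra of dimension d ≥ 1 over an infinite field k, and let k[X₁,...,X_d] ⊆ S and k[Y₁,...,Y_d] ⊆ S be graded Noether normalizations with all Xᵢ, Yᵢ ∈ S₁. Then there is a finite union M of proper k-subspaces of k^d such that for c = (c₁,...,c_d) ∈ k^d, the inclusion k[X₁,...,X_{d-1}, Σⱼ cⱼYⱼ] ⊆ S is a graded Noether normalization if and only if c ∉ M. -/
/-- A family `x : Fin d → S` of degree-1 elements gives a graded Noether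
normalization `k[x₁, …, x_d] ⊆ S`: the `xᵢ` generate a polynomial subring over
which `S` is module-finite. -/
def IsGradedNoetherNormalization (k : Type*) {S : Type*} [Field k] [CommRing S]
    [Algebra k S] (𝒜 : ℕ → Submodule k S) {d : ℕ} (x : Fin d → S) : Prop :=
  (∀ i, x i ∈ 𝒜 1) ∧ AlgebraicIndependent k x ∧
    Module.Finite (Algebra.adjoin k (Set.range x)) S

/-!
Replacing `Xᵢ₀` by `z` in a Noether normalization `k[X] ⊆ S` can fail only at the primes `P` that
are minimal over `I = (Xᵢ : i ≠ i₀)`: the new family is again a normalization iff every such `P`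
containing `z` is maximal. Indeed, a prime containing a family over which `S` is finite is maximal.
Conversely `S ⧸ I` has dimension at most one, so the hypothesis on `z` makes `S ⧸ (I + (z))`
zero-dimensional, hence finite over `k`, and graded Nakayama lifts this to finiteness of `S` over
the new subalgebra; algebraic independence then comes for free by counting transcendence degrees.

For `z = ∑ⱼ cⱼ Yⱼ` the condition `z ∈ P` is linear in `c`, and it does not hold for all `c` when
`P` is not maximal, because `S` is finite over `k[Y]`. As `S` is noetherian, there are only finitely
many `P`.
-/

section Decomposition

variable {R M κ : Type*} [DecidableEq κ] [Semiring R] [AddCommMonoid M] [Module R M]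
  (ℳ : κ → Submodule R M) [DirectSum.Decomposition ℳ]

theorem decompose_mem_span_of_isHomogeneousElem {F : Set M}
    (hF : ∀ f ∈ F, SetLike.IsHomogeneousElem ℳ f) {s : M} (hs : s ∈ Submodule.span R F) (n : κ) :
    (DirectSum.decompose ℳ s n : M) ∈ Submodule.span R F := by
  induction hs using Submodule.span_induction with
  | mem f hf =>
    obtain ⟨m, hm⟩ := hF f hf
    rw [DirectSum.decompose_of_mem ℳ hm, DirectSum.coe_of_apply]
    split_ifs
    · exact Submodule.subset_span hf
    · exact zero_mem _
  | zero => simp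
  | add s t _ _ hs ht => simpa using add_mem hs ht
  | smul r s _ hs => rw [DirectSum.decompose_smul]; exact Submodule.smul_mem _ r hs

theorem exists_finite_isHomogeneousElem_subset_span {G : Set M} (hG : G.Finite) :
    ∃ F : Set M, F.Finite ∧ (∀ f ∈ F, SetLike.IsHomogeneousElem ℳ f) ∧
      G ⊆ Submodule.span R F := by
  classical
  refine ⟨⋃ g ∈ G, (fun n ↦ (DirectSum.decompose ℳ g n : M)) '' (DirectSum.decompose ℳ g).support,
    hG.biUnion fun g _ ↦ (Finset.finite_toSet _).image _, ?_, fun g hg ↦ ?_⟩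
  · simp only [Set.mem_iUnion]
    rintro _ ⟨g, _, n, _, rfl⟩
    exact ⟨n, SetLike.coe_mem _⟩
  · rw [SetLike.mem_coe, ← DirectSum.sum_support_decompose ℳ g]
    exact sum_mem fun n hn ↦ Submodule.subset_span (Set.mem_biUnion hg ⟨n, hn, rfl⟩)

end Decomposition

section GradedNakayama

variable {R S ι : Type*} [CommRing R] [CommRing S] [Algebra R S] (𝒜 : ℕ → Submodule R S)
  [GradedAlgebra 𝒜]

theorem proj_mem_of_mem_span_range {x : ι → S} (hx : ∀ i, ∃ m > 0, x i ∈ 𝒜 m)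
    {N : Submodule (Algebra.adjoin R (Set.range x)) S} {n : ℕ}
    (hN : ∀ m < n, ∀ s ∈ 𝒜 m, s ∈ N) {s : S} (hs : s ∈ Ideal.span (Set.range x)) :
    GradedAlgebra.proj 𝒜 n s ∈ N := by
  obtain ⟨c, rfl⟩ := Finsupp.mem_ideal_span_range_iff_exists_finsupp.1 hs
  rw [Finsupp.sum, map_sum]
  refine sum_mem fun i _ ↦ ?_
  obtain ⟨m, hm, hxm⟩ := hx i
  rw [GradedAlgebra.proj_apply, DirectSum.coe_decompose_mul_of_right_mem 𝒜 n hxm]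
  split_ifs with hn
  · rw [mul_comm]
    exact N.smul_mem (⟨x i, Algebra.subset_adjoin ⟨i, rfl⟩⟩ : Algebra.adjoin R (Set.range x))
      (hN (n - m) (by lia) _ (SetLike.coe_mem _))
  · exact zero_mem _

theorem span_adjoin_range_eq_top_of_sup_eq_top {x : ι → S} (hx : ∀ i, ∃ m > 0, x i ∈ 𝒜 m)
    {F : Set S} (hF : ∀ f ∈ F, SetLike.IsHomogeneousElem 𝒜 f)
    (hspan : Submodule.span R F ⊔ (Ideal.span (Set.range x)).restrictScalars R = ⊤) :
    Submodule.span (Algebra.adjoin R (Set.range x)) F = ⊤ := by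
  set N := Submodule.span (Algebra.adjoin R (Set.range x)) F
  have hFN : Submodule.span R F ≤ N.restrictScalars R := Submodule.span_le_restrictScalars _ _ _
  have hN (n : ℕ) : 𝒜 n ≤ N.restrictScalars R := by
    induction n using Nat.strong_induction_on with
    | _ n ih =>
      intro s hs
      obtain ⟨f, hf, j, hj, rfl⟩ := Submodule.mem_sup.1 (hspan ▸ Submodule.mem_top (x := s))
      rw [← DirectSum.decompose_of_mem_same 𝒜 hs, ← GradedAlgebra.proj_apply, map_add]
      exact add_mem (hFN (decompose_mem_span_of_isHomogeneousElem 𝒜 hF hf n))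
        (proj_mem_of_mem_span_range 𝒜 hx ih hj)
  rw [← Submodule.restrictScalars_eq_top_iff R, eq_top_iff,
    ← (DirectSum.Decomposition.isInternal 𝒜).submodule_iSup_eq_top]
  exact iSup_le hN

theorem finite_adjoin_range_of_finite_quotient {x : ι → S} (hx : ∀ i, ∃ m > 0, x i ∈ 𝒜 m)
    [Module.Finite R (S ⧸ Ideal.span (Set.range x))] :
    Module.Finite (Algebra.adjoin R (Set.range x)) S := by
  let π := (Ideal.Quotient.mkₐ R (Ideal.span (Set.range x))).toLinearMap
  have hπ : Function.Surjective π := Ideal.Quotient.mk_surjective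
  have hker : LinearMap.ker π = (Ideal.span (Set.range x)).restrictScalars R := by
    ext; simp [π, Ideal.Quotient.eq_zero_iff_mem]
  obtain ⟨G, hG⟩ := Module.Finite.fg_top (R := R) (M := S ⧸ Ideal.span (Set.range x))
  obtain ⟨F, hFfin, hF, hGF⟩ := exists_finite_isHomogeneousElem_subset_span 𝒜
    (G.finite_toSet.image (Function.surjInv hπ))
  have hmap : (Submodule.span R F).map π = ⊤ := by
    rw [eq_top_iff, ← hG, Submodule.span_le]
    exact fun g hg ↦ ⟨_, hGF ⟨g, hg, rfl⟩, Function.surjInv_eq hπ g⟩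
  rw [LinearMap.map_eq_top_iff (LinearMap.range_eq_top.2 hπ), hker] at hmap
  exact ⟨⟨hFfin.toFinset, by
    rw [hFfin.coe_toFinset, span_adjoin_range_eq_top_of_sup_eq_top 𝒜 hx hF hmap]⟩⟩

end GradedNakayama

section IntegralAdjoin

theorem ringKrullDim_le_of_isIntegral (R T : Type*) [CommRing R] [CommRing T] [Algebra R T]
    [Algebra.IsIntegral R T] : ringKrullDim T ≤ ringKrullDim R :=
  Order.krullDim_le_of_strictMono (PrimeSpectrum.comap (algebraMap R T)) fun P Q hPQ ↦
    Ideal.IsIntegral.comap_lt_comap (R := R) (I := P.asIdeal) (J := Q.asIdeal) hPQ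

variable {R S T ι : Type*} [CommRing R] [CommRing S] [CommRing T] [Algebra R S] [Algebra R T]

theorem ringKrullDim_le_add_card_of_isIntegral_adjoin [IsNoetherianRing R] [Finite ι] (y : ι → T)
    [Algebra.IsIntegral (Algebra.adjoin R (Set.range y)) T] :
    ringKrullDim T ≤ ringKrullDim R + Nat.card ι := by
  rw [← MvPolynomial.ringKrullDim_of_isNoetherianRing]
  refine (ringKrullDim_le_of_isIntegral (Algebra.adjoin R (Set.range y)) T).trans ?_
  rw [Algebra.adjoin_range_eq_range_aeval]
  exact ringKrullDim_le_of_surjective _ (MvPolynomial.aeval y).rangeRestrict_surjective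

theorem finiteType_of_finite_adjoin_range [Finite ι] (x : ι → S)
    [Module.Finite (Algebra.adjoin R (Set.range x)) S] : Algebra.FiniteType R S :=
  .trans (.adjoin_of_finite (Set.finite_range x)) (Module.Finite.finiteType S)

theorem isIntegral_adjoin_of_surjective {f : S →ₐ[R] T} (hf : Function.Surjective f) {s : Set S}
    {t : Set T} [Algebra.IsIntegral (Algebra.adjoin R s) S]
    (hst : ∀ a ∈ s, f a ∈ Algebra.adjoin R t) :
    Algebra.IsIntegral (Algebra.adjoin R t) T := by
  have hle : Algebra.adjoin R s ≤ (Algebra.adjoin R t).comap f := Algebra.adjoin_le hst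
  let φ := (f.comp (Algebra.adjoin R s).val).codRestrict (Algebra.adjoin R t) fun a ↦ hle a.2
  refine ⟨fun b ↦ ?_⟩
  obtain ⟨a, rfl⟩ := hf b
  exact (Algebra.IsIntegral.isIntegral (R := Algebra.adjoin R s) a).map_of_comp_eq
    φ.toRingHom f.toRingHom rfl

theorem exists_isPrime_algebraicIndependent_mk [IsDomain R] {x : ι → S}
    (hx : AlgebraicIndependent R x) :
    ∃ P : Ideal S, P.IsPrime ∧ AlgebraicIndependent R (Ideal.Quotient.mkₐ R P ∘ x) := by
  let polys : MvPolynomial ι R →ₐ[R] S := MvPolynomial.aeval x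
  obtain ⟨P, hP, -, hdisj⟩ := Ideal.exists_le_prime_disjoint (⊥ : Ideal S)
    ((nonZeroDivisors (MvPolynomial ι R)).map polys) <| by
      rw [Set.disjoint_left]
      rintro _ h0 ⟨p, hp, rfl⟩
      exact nonZeroDivisors.ne_zero hp (hx.eq_zero_of_aeval_eq_zero p h0)
  refine ⟨P, hP, algebraicIndependent_iff.2 fun p hp ↦ by_contra fun hp0 ↦ ?_⟩
  rw [Function.comp_def, ← MvPolynomial.comp_aeval_apply, Ideal.Quotient.mkₐ_eq_mk,
    Ideal.Quotient.eq_zero_iff_mem] at hp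
  exact Set.disjoint_left.1 hdisj hp ⟨p, mem_nonZeroDivisors_of_ne_zero hp0, rfl⟩

/-- Modulo a prime that meets `R[x]` only in `0`, the claim becomes a comparison of transcendence
degrees in a domain. -/
theorem algebraicIndependent_of_isIntegral_adjoin [IsDomain R] [Finite ι] {x z : ι → S}
    (hx : AlgebraicIndependent R x) [Algebra.IsIntegral (Algebra.adjoin R (Set.range z)) S] :
    AlgebraicIndependent R z := by
  obtain ⟨P, _, hxP⟩ := exists_isPrime_algebraicIndependent_mk hx
  have : FaithfulSMul R (S ⧸ P) := (faithfulSMul_iff_algebraMap_injective _ _).2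
    hxP.algebraMap_injective
  have hz : Algebra.IsIntegral (Algebra.adjoin R (Set.range (Ideal.Quotient.mkₐ R P ∘ z)))
      (S ⧸ P) := by
    refine isIntegral_adjoin_of_surjective (s := Set.range z) (Ideal.Quotient.mkₐ_surjective R P) ?_
    rintro _ ⟨i, rfl⟩
    exact Algebra.subset_adjoin ⟨i, rfl⟩
  exact .of_comp (Ideal.Quotient.mkₐ R P)
    (Algebra.IsAlgebraic.isTranscendenceBasis_of_lift_le_trdeg_of_finite R
      (Ideal.Quotient.mkₐ R P ∘ z) hxP.lift_cardinalMk_le_trdeg).1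

end IntegralAdjoin

section KrullDimension

theorem mem_minimalPrimes_or_isMaximal_of_krullDimLE_one {A : Type*} [CommRing A] {I Q : Ideal A}
    [Ring.KrullDimLE 1 (A ⧸ I)] [Q.IsPrime] (hIQ : I ≤ Q) :
    Q ∈ I.minimalPrimes ∨ Q.IsMaximal := by
  have hcomap : (Q.map (Ideal.Quotient.mk I)).comap (Ideal.Quotient.mk I) = Q :=
    Ideal.comap_map_mk hIQ
  have hprime : (Q.map (Ideal.Quotient.mk I)).IsPrime :=
    Ideal.map_isPrime_of_surjective Ideal.Quotient.mk_surjective (by rwa [Ideal.mk_ker])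
  rcases (Ring.krullDimLE_one_iff (R := A ⧸ I)).1 inferInstance _ hprime with hmin | hmax
  · exact .inl (by rw [Ideal.minimalPrimes_eq_comap]; exact ⟨_, hmin, hcomap⟩)
  · exact .inr (hcomap ▸ Ideal.comap_isMaximal_of_surjective _ Ideal.Quotient.mk_surjective)

variable {k S ι : Type*} [Field k] [CommRing S] [Algebra k S] {x : ι → S}

theorem krullDimLE_card_quotient (t : Finset ι) {I : Ideal S} (hI : ∀ i ∉ t, x i ∈ I)
    [Algebra.IsIntegral (Algebra.adjoin k (Set.range x)) S] : Ring.KrullDimLE t.card (S ⧸ I) := by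
  let y : t → S ⧸ I := fun i ↦ Ideal.Quotient.mkₐ k I (x i)
  have : Algebra.IsIntegral (Algebra.adjoin k (Set.range y)) (S ⧸ I) := by
    refine isIntegral_adjoin_of_surjective (s := Set.range x) (Ideal.Quotient.mkₐ_surjective k I) ?_
    rintro _ ⟨i, rfl⟩
    by_cases hi : i ∈ t
    · exact Algebra.subset_adjoin ⟨⟨i, hi⟩, rfl⟩
    · rw [Ideal.Quotient.mkₐ_eq_mk, Ideal.Quotient.eq_zero_iff_mem.2 (hI i hi)]
      exact zero_mem _
  simpa [Ring.krullDimLE_iff] using ringKrullDim_le_add_card_of_isIntegral_adjoin (R := k) y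

variable (k) in
theorem isMaximal_of_forall_mem [Algebra.IsIntegral (Algebra.adjoin k (Set.range x)) S]
    {P : Ideal S} [P.IsPrime] (hP : ∀ i, x i ∈ P) : P.IsMaximal := by
  have : Ring.KrullDimLE 0 (S ⧸ P) := krullDimLE_card_quotient (k := k) ∅ fun i _ ↦ hP i
  exact Ideal.Quotient.maximal_of_isField P Ring.KrullDimLE.isField_of_isDomain

end KrullDimension

section Exchange

variable {k S ι : Type*} [Field k] [CommRing S] [Algebra k S] {𝒜 : ℕ → Submodule k S}
  [GradedAlgebra 𝒜]

theorem finite_adjoin_range_of_forall_isMaximal [Algebra.FiniteType k S] {x : ι → S}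
    (hx : ∀ i, ∃ m > 0, x i ∈ 𝒜 m)
    (hmax : ∀ P ∈ (Ideal.span (Set.range x)).minimalPrimes, P.IsMaximal) :
    Module.Finite (Algebra.adjoin k (Set.range x)) S := by
  have : Ring.KrullDimLE 0 (S ⧸ Ideal.span (Set.range x)) :=
    Ideal.krullDimLE_zero_quotient_iff_forall_minimalPrimes_isMaximal.2 hmax
  have : Module.Finite k (S ⧸ Ideal.span (Set.range x)) :=
    (Module.finite_iff_krullDimLE_zero _ _).2 this
  exact finite_adjoin_range_of_finite_quotient 𝒜 hx

variable [DecidableEq ι]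

theorem finite_adjoin_range_update_iff [Finite ι] {x : ι → S} (hx : ∀ i, ∃ m > 0, x i ∈ 𝒜 m)
    [Module.Finite (Algebra.adjoin k (Set.range x)) S] (i₀ : ι) {z : S}
    (hz : ∃ m > 0, z ∈ 𝒜 m) :
    Module.Finite (Algebra.adjoin k (Set.range (Function.update x i₀ z))) S ↔
      ∀ P ∈ (Ideal.span (x '' {i₀}ᶜ)).minimalPrimes, z ∈ P → P.IsMaximal := by
  have forall_update_mem {P : Ideal S} :
      (∀ i, Function.update x i₀ z i ∈ P) ↔ z ∈ P ∧ Ideal.span (x '' {i₀}ᶜ) ≤ P := by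
    simp [Function.forall_update_iff x (fun _ s ↦ s ∈ P), Ideal.span_le, Set.subset_def]
  refine ⟨fun _ P hP hzP ↦ ?_, fun h ↦ ?_⟩
  · have := hP.1.1
    exact isMaximal_of_forall_mem k (forall_update_mem.2 ⟨hzP, hP.1.2⟩)
  · have := finiteType_of_finite_adjoin_range (R := k) x
    have : Ring.KrullDimLE 1 (S ⧸ Ideal.span (x '' {i₀}ᶜ)) :=
      krullDimLE_card_quotient (k := k) (x := x) {i₀} fun i hi ↦
        Ideal.subset_span ⟨i, by simpa using hi, rfl⟩
    refine finite_adjoin_range_of_forall_isMaximal (𝒜 := 𝒜)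
      ((Function.forall_update_iff x fun _ s ↦ ∃ m > 0, s ∈ 𝒜 m).2 ⟨hz, fun i _ ↦ hx i⟩)
      fun Q hQ ↦ ?_
    obtain ⟨hzQ, hIQ⟩ := forall_update_mem.1 fun i ↦ hQ.1.2 (Ideal.subset_span ⟨i, rfl⟩)
    have := hQ.1.1
    exact (mem_minimalPrimes_or_isMaximal_of_krullDimLE_one hIQ).elim (h Q · hzQ) id

end Exchange

section GenericExchange

variable {k S : Type*} [Field k] [CommRing S] [Algebra k S] {𝒜 : ℕ → Submodule k S}
  [GradedAlgebra 𝒜] {d : ℕ} {X : Fin d → S}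

theorem IsGradedNoetherNormalization.update_iff (hX : IsGradedNoetherNormalization k 𝒜 X)
    (i₀ : Fin d) {z : S} (hz : z ∈ 𝒜 1) :
    IsGradedNoetherNormalization k 𝒜 (Function.update X i₀ z) ↔
      ∀ P ∈ (Ideal.span (X '' {i₀}ᶜ)).minimalPrimes, z ∈ P → P.IsMaximal := by
  obtain ⟨hX1, hXind, _⟩ := hX
  rw [← finite_adjoin_range_update_iff (fun i ↦ ⟨1, one_pos, hX1 i⟩) i₀ ⟨1, one_pos, hz⟩]
  refine ⟨fun h ↦ h.2.2, fun h ↦ ⟨?_, algebraicIndependent_of_isIntegral_adjoin hXind, h⟩⟩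
  exact (Function.forall_update_iff X fun _ s ↦ s ∈ 𝒜 1).2 ⟨hz, fun i _ ↦ hX1 i⟩

theorem comap_linearCombination_ne_top {ι : Type*} [Fintype ι] {Y : ι → S}
    [Algebra.IsIntegral (Algebra.adjoin k (Set.range Y)) S] {P : Ideal S} [P.IsPrime]
    (hP : ¬ P.IsMaximal) :
    (P.restrictScalars k).comap (Fintype.linearCombination k Y) ≠ ⊤ := by
  classical
  contrapose! hP
  refine isMaximal_of_forall_mem k (x := Y) fun j ↦ ?_
  simpa using hP.ge (Submodule.mem_top (x := Pi.single j 1))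

theorem generic_exchange_noether_normalization_general {ι : Type*} [Fintype ι] {Y : ι → S}
    (hX : IsGradedNoetherNormalization k 𝒜 X) (hY1 : ∀ j, Y j ∈ 𝒜 1)
    (hY : Module.Finite (Algebra.adjoin k (Set.range Y)) S) (i₀ : Fin d) :
    ∃ (r : ℕ) (W : Fin r → Submodule k (ι → k)),
      (∀ i, W i ≠ ⊤) ∧
      ∀ c : ι → k,
        (IsGradedNoetherNormalization k 𝒜 (Function.update X i₀ (∑ j, c j • Y j))
          ↔ c ∉ ⋃ i, (W i : Set (ι → k))) := by
  have := finiteType_of_finite_adjoin_range (R := k) Y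
  have := Algebra.FiniteType.isNoetherianRing k S
  let bad := {P ∈ (Ideal.span (X '' {i₀}ᶜ)).minimalPrimes | ¬ P.IsMaximal}
  have hbad : bad.Finite := (Ideal.finite_minimalPrimes_of_isNoetherianRing S _).sep _
  obtain ⟨r, P, -, hP⟩ := hbad.fin_param
  have mem_bad (i : Fin r) : P i ∈ bad := hP ▸ Set.mem_range_self i
  let W (i : Fin r) := ((P i).restrictScalars k).comap (Fintype.linearCombination k Y)
  refine ⟨r, W, fun i ↦ ?_, fun c ↦ ?_⟩
  · have := (mem_bad i).1.1.1
    exact comap_linearCombination_ne_top (mem_bad i).2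
  · have hz : ∑ j, c j • Y j ∈ 𝒜 1 := sum_mem fun j _ ↦ Submodule.smul_mem _ _ (hY1 j)
    have mem_iUnion : c ∈ ⋃ i, (W i : Set (ι → k)) ↔ ∃ Q ∈ bad, ∑ j, c j • Y j ∈ Q := by
      simp [W, ← hP, Fintype.linearCombination_apply]
    rw [hX.update_iff i₀ hz, mem_iUnion]
    simp only [bad, Set.mem_ofPred_eq]
    grind

end GenericExchange

theorem ite_val_add_one_eq_update_last {α : Type*} {n : ℕ} (f : Fin (n + 1) → α) (a : α) :
    (fun i : Fin (n + 1) ↦ if (i : ℕ) + 1 = n + 1 then a else f i) =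
      Function.update f (Fin.last n) a := by
  funext i
  simp [Function.update_apply, Fin.ext_iff]

/-- Generic exchange for graded Noether normalizations: given two graded
Noether normalizations `k[X₁,…,X_d]` and `k[Y₁,…,Y_d]` of a standard graded
algebra `S` of dimension `d ≥ 1` over an infinite field, there is a finite
union of proper subspaces `M ⊊ k^d` such that `k[X₁,…,X_{d-1}, Σ cⱼYⱼ] ⊆ S` is
a graded Noether normalization iff `c ∉ M`. -/
theorem generic_exchange_noether_normalization (k S : Type*) [Field k]
    [Infinite k] [CommRing S] [Algebra k S] (𝒜 : ℕ → Submodule k S)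
    [GradedAlgebra 𝒜] (hfg : Algebra.FiniteType k S) (h0 : 𝒜 0 = 1)
    (hstd : Algebra.adjoin k (𝒜 1 : Set S) = ⊤)
    (d : ℕ) (hd : 1 ≤ d) (hdim : ringKrullDim S = d)
    (X Y : Fin d → S)
    (hX : IsGradedNoetherNormalization k 𝒜 X)
    (hY : IsGradedNoetherNormalization k 𝒜 Y) :
    ∃ (r : ℕ) (W : Fin r → Submodule k (Fin d → k)),
      (∀ i, W i ≠ ⊤) ∧
      ∀ c : Fin d → k,
        (IsGradedNoetherNormalization k 𝒜
            (fun i : Fin d => if (i : ℕ) + 1 = d then ∑ j, c j • Y j else X i)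
          ↔ c ∉ ⋃ i, (W i : Set (Fin d → k))) := by
  obtain ⟨n, rfl⟩ := Nat.exists_eq_add_of_le' hd
  simpa only [ite_val_add_one_eq_update_last] using
    generic_exchange_noether_normalization_general hX hY.1 hY.2.2 (Fin.last n)
end

section
/- Let (R, 𝔪, k) be a Noetherian local ring with infinite residue field, I a proper ideal with analytic spread d > 0, and 𝔞 = (a₁,...,a_d), 𝔟 = (b₁,...,b_d) minimal reductions of I. Then there exists an element b ∈ 𝔟 such that (a₁,...,a_{d-1}, b) is a minimal reduction of I. -/
/-- `J` is a reduction of `I`: `J ⊆ I` and `J Iⁿ = I^{n+1}` for some `n`. -/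
def IsReduction {R : Type*} [CommRing R] (J I : Ideal R) : Prop :=
  J ≤ I ∧ ∃ n : ℕ, I ^ (n + 1) = J * I ^ n

/-- `J` is a minimal reduction of `I`: a reduction minimal w.r.t. inclusion. -/
def IsMinimalReduction {R : Type*} [CommRing R] (J I : Ideal R) : Prop :=
  IsReduction J I ∧ ∀ J' : Ideal R, IsReduction J' I → J' ≤ J → J' = J

/-- The fiber (special fiber) ring `𝓕(I) = 𝓡(I)/𝔪𝓡(I) = ⊕ Iⁿ/𝔪Iⁿ` of an ideal
`I` in a local ring `(R, 𝔪)`. -/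
noncomputable def fiberRing (R : Type*) [CommRing R] [IsLocalRing R]
    (I : Ideal R) : Type _ :=
  ↥(reesAlgebra I) ⧸
    (Ideal.map (algebraMap R ↥(reesAlgebra I)) (IsLocalRing.maximalIdeal R))

noncomputable instance (R : Type*) [CommRing R] [IsLocalRing R] (I : Ideal R) :
    CommRing (fiberRing R I) :=
  inferInstanceAs (CommRing (↥(reesAlgebra I) ⧸
    (Ideal.map (algebraMap R ↥(reesAlgebra I)) (IsLocalRing.maximalIdeal R))))

/-- The analytic spread `ℓ(I) = dim 𝓕(I)`. -/
noncomputable def analyticSpread (R : Type*) [CommRing R] [IsLocalRing R]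
    (I : Ideal R) : WithBot ℕ∞ :=
  ringKrullDim (fiberRing R I)

/-!
Minimality: if `J` is a reduction of `I`, the Rees algebra of `I` is integral over that of `J`, so
`ℓ(I) ≤ ℓ(J) ≤ μ(J)`. By Nakayama's lemma a reduction strictly inside `J` contains a reduction with
fewer than `μ(J)` generators, so a reduction generated by `ℓ(I)` elements is minimal.

Exchange: let `(a) + J` and `B` be reductions of `I`. Modulo the weak transform of `J`, the affine
blowup algebra `R[I/a]` is a finite `R`-module, hence has finitely many maximal ideals. None of them
contains `x/a` for all `x ∈ B`, since `a ^ (n + 1) ∈ B Iⁿ` for some `n`. As the residue field is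
infinite, a single `x ∈ B` has `x/a` outside all of them. Then `x/a` is a unit modulo the weak
transform, and clearing denominators gives `a ^ (n + 1) ∈ ((x) + J) Iⁿ` for some `n`, which makes
`(x) + J` a reduction of `I`.
-/

open IsLocalRing Polynomial

theorem spanFinrank_lt_spanFinrank_top {K V : Type*} [Field K] [AddCommGroup V] [Module K V]
    [Module.Finite K V] {W : Submodule K V} (hW : W ≠ ⊤) :
    W.spanFinrank < (⊤ : Submodule K V).spanFinrank := by
  rw [← W.spanFinrank_top, ← Module.finrank_eq_spanFinrank_of_free,
    ← Module.finrank_eq_spanFinrank_of_free]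
  exact Submodule.finrank_lt hW

section ResidueField

variable {R M : Type*} [CommRing R] [IsLocalRing R] [AddCommGroup M] [Module R M]

theorem restrictScalars_baseChange_residueField (P : Submodule R M) :
    (P.baseChange (ResidueField R)).restrictScalars R =
      P.map (TensorProduct.mk R (ResidueField R) M 1) := by
  rw [Submodule.baseChange_eq_span, Submodule.restrictScalars_span _ _ residue_surjective,
    Submodule.span_eq]

theorem baseChange_residueField_eq_top_iff [Module.Finite R M] {P : Submodule R M} :
    P.baseChange (ResidueField R) = ⊤ ↔ P = ⊤ := by
  rw [← Submodule.restrictScalars_eq_top_iff R, restrictScalars_baseChange_residueField,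
    map_tensorProduct_mk_eq_top]

theorem exists_forall_notMem_of_ne_top [Infinite (ResidueField R)] [Module.Finite R M]
    {ι : Type*} [Finite ι] (p : ι → Submodule R M) (hp : ∀ i, p i ≠ ⊤) : ∃ x, ∀ i, x ∉ p i := by
  by_contra! hcover
  obtain ⟨i, hi⟩ := Subspace.exists_eq_top_of_iUnion_eq_univ
    (p := fun i ↦ (p i).baseChange (ResidueField R)) <| by
      refine Set.eq_univ_of_forall fun z ↦ ?_
      obtain ⟨x, rfl⟩ := TensorProduct.mk_surjective R M _ residue_surjective z
      obtain ⟨i, hi⟩ := hcover x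
      exact Set.mem_iUnion.mpr ⟨i, Submodule.tmul_mem_baseChange_of_mem 1 hi⟩
  exact hp i (baseChange_residueField_eq_top_iff.mp hi)

theorem finite_maximalSpectrum_of_finite (A : Type*) [CommRing A] [Algebra R A]
    [Module.Finite R A] : Finite (MaximalSpectrum A) := by
  have hfin := (Algebra.QuasiFinite.finite_primesOver (S := A) (maximalIdeal R)).to_subtype
  have hover (𝔫 : MaximalSpectrum A) : 𝔫.asIdeal ∈ (maximalIdeal R).primesOver A :=
    ⟨𝔫.isMaximal.isPrime,
      ⟨(eq_maximalIdeal (Ideal.isMaximal_comap_of_isIntegral_of_isMaximal _)).symm⟩⟩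
  exact Finite.of_injective (fun 𝔫 ↦ (⟨_, hover 𝔫⟩ : (maximalIdeal R).primesOver A))
    fun _ _ h ↦ MaximalSpectrum.ext (congrArg Subtype.val h)

theorem exists_isUnit_of_forall_isMaximal_exists_notMem [Infinite (ResidueField R)]
    [Module.Finite R M] {A : Type*} [CommRing A] [Algebra R A] [Module.Finite R A] (f : M →ₗ[R] A)
    (hf : ∀ 𝔐 : Ideal A, 𝔐.IsMaximal → ∃ x, f x ∉ 𝔐) : ∃ x, IsUnit (f x) := by
  have := finite_maximalSpectrum_of_finite (R := R) A
  obtain ⟨x, hx⟩ := exists_forall_notMem_of_ne_top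
    (fun 𝔐 : MaximalSpectrum A ↦ (𝔐.asIdeal.restrictScalars R).comap f) fun 𝔐 htop ↦ by
      obtain ⟨x, hx⟩ := hf _ 𝔐.isMaximal
      exact hx (Submodule.eq_top_iff'.mp htop x)
  refine ⟨x, by_contra fun hunit ↦ ?_⟩
  obtain ⟨𝔐, h𝔐, hx𝔐⟩ := exists_max_ideal_of_mem_nonunits hunit
  exact hx ⟨𝔐, h𝔐⟩ hx𝔐

theorem exists_le_sup_smul_top_spanFinrank_le [Module.Finite R M] (P : Submodule R M) :
    ∃ Q ≤ P, Q.spanFinrank ≤ (P.baseChange (ResidueField R)).spanFinrank ∧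
      P ≤ Q ⊔ maximalIdeal R • ⊤ := by
  obtain ⟨s, hs_card, hs_span⟩ :=
    (IsNoetherian.noetherian (P.baseChange (ResidueField R))).exists_span_set_encard_eq_spanFinrank
  have hmap : P.map (TensorProduct.mk R (ResidueField R) M 1) = Submodule.span R s := by
    rw [← restrictScalars_baseChange_residueField, ← Submodule.restrictScalars_span _ _
      residue_surjective, hs_span]
  have hsurj : Set.SurjOn (TensorProduct.mk R (ResidueField R) M 1) P s :=
    Submodule.span_le.mp hmap.ge
  obtain ⟨t, htP, ht⟩ := hsurj.exists_bijOn_subset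
  have ht_card : t.encard = (P.baseChange (ResidueField R)).spanFinrank := by
    rw [← hs_card, ← ht.image_eq, ht.injOn.encard_image]
  refine ⟨Submodule.span R t, Submodule.span_le.mpr htP, ?_, ?_⟩
  · exact_mod_cast ht_card ▸ Submodule.spanFinrank_span_le_encard (R := R) t
  · have hker : LinearMap.ker (TensorProduct.mk R (ResidueField R) M 1) = maximalIdeal R • ⊤ :=
      LinearMap.ker_tensorProductMk M
    rw [← hker, ← Submodule.comap_map_eq, ← Submodule.map_le_iff_le_comap, hmap,
      Submodule.map_span, ht.image_eq]

theorem spanFinrank_baseChange_residueField_lt {P N : Submodule R M} (hN : N.FG) (hPN : P < N) :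
    ((P.submoduleOf N).baseChange (ResidueField R)).spanFinrank < N.spanFinrank := by
  have : Module.Finite R N := Module.Finite.iff_fg.mpr hN
  have hne : (P.submoduleOf N).baseChange (ResidueField R) ≠ ⊤ := by
    rw [Ne, baseChange_residueField_eq_top_iff, Submodule.submoduleOf_eq_top]
    exact hPN.not_ge
  rw [← TensorProduct.spanFinrank_top_eq_of_residueField N hN]
  exact spanFinrank_lt_spanFinrank_top hne

theorem exists_le_sup_smul_spanFinrank_lt {P N : Submodule R M} (hN : N.FG) (hPN : P < N) :
    ∃ Q ≤ P, Q.spanFinrank < N.spanFinrank ∧ P ≤ Q ⊔ maximalIdeal R • N := by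
  have : Module.Finite R N := Module.Finite.iff_fg.mpr hN
  obtain ⟨Q, hQP, hQ_rank, hPQ⟩ := exists_le_sup_smul_top_spanFinrank_le (P.submoduleOf N)
  have hmap : (P.submoduleOf N).map N.subtype = P := by
    rw [Submodule.submoduleOf, Submodule.map_comap_subtype, inf_eq_right.mpr hPN.le]
  refine ⟨Q.map N.subtype, hmap ▸ Submodule.map_mono hQP, ?_, ?_⟩
  · rw [Submodule.spanFinrank_map_eq_of_injective _ N.subtype_injective]
    exact hQ_rank.trans_lt (spanFinrank_baseChange_residueField_lt hN hPN)
  · calc P = (P.submoduleOf N).map N.subtype := hmap.symm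
      _ ≤ (Q ⊔ maximalIdeal R • ⊤).map N.subtype := Submodule.map_mono hPQ
      _ = Q.map N.subtype ⊔ maximalIdeal R • N := by
        rw [Submodule.map_sup, Submodule.map_smul'', Submodule.map_subtype_top]

end ResidueField

section Reduction

variable {R : Type*} [CommRing R] {I J : Ideal R}

theorem pow_add_eq_pow_mul_of_pow_succ_eq {n : ℕ} (h : I ^ (n + 1) = J * I ^ n) (k : ℕ) :
    I ^ (n + k) = J ^ k * I ^ n := by
  induction k with
  | zero => simp
  | succ k ih => rw [← add_assoc, pow_succ, ih, mul_assoc, ← pow_succ, h, ← mul_assoc, ← pow_succ]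

theorem sup_pow_succ_le (A J : Ideal R) (k : ℕ) :
    (A ⊔ J) ^ (k + 1) ≤ A ^ (k + 1) ⊔ J * (A ⊔ J) ^ k := by
  induction k with
  | zero => simp
  | succ k ih =>
    calc (A ⊔ J) ^ (k + 2) = A * (A ⊔ J) ^ (k + 1) ⊔ J * (A ⊔ J) ^ (k + 1) := by
          rw [pow_succ', Ideal.sup_mul]
      _ ≤ (A ^ (k + 2) ⊔ J * (A * (A ⊔ J) ^ k)) ⊔ J * (A ⊔ J) ^ (k + 1) := by
          rw [pow_succ' A (k + 1), mul_left_comm J, ← Ideal.mul_sup]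
          gcongr
      _ ≤ A ^ (k + 2) ⊔ J * (A ⊔ J) ^ (k + 1) := by
          rw [sup_assoc, pow_succ' (A ⊔ J) k]
          gcongr
          exact sup_le (by gcongr; exact le_sup_left) le_rfl

namespace IsReduction

theorem of_pow_le (hJI : J ≤ I) {n : ℕ} (h : I ^ (n + 1) ≤ J * I ^ n) : IsReduction J I :=
  ⟨hJI, n, h.antisymm <| by rw [pow_succ']; gcongr⟩

theorem of_le_sup_maximalIdeal_mul [IsNoetherianRing R] [IsLocalRing R] {K : Ideal R}
    (hK : IsReduction K I) (hJI : J ≤ I) (hKJ : K ≤ J ⊔ maximalIdeal R * I) : IsReduction J I := by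
  obtain ⟨-, n, hn⟩ := hK
  refine of_pow_le hJI (n := n) <| Submodule.le_of_le_smul_of_le_jacobson_bot
    (IsNoetherian.noetherian _) (maximalIdeal_le_jacobson _) ?_
  calc I ^ (n + 1) = K * I ^ n := hn
    _ ≤ (J ⊔ maximalIdeal R * I) * I ^ n := by gcongr
    _ = J * I ^ n ⊔ maximalIdeal R * I ^ (n + 1) := by rw [Ideal.sup_mul, mul_assoc, pow_succ']

theorem exists_pow_le_span_pow_mul_sup {a : R} (h : IsReduction (Ideal.span {a} ⊔ J) I) :
    ∃ n, ∀ k, I ^ (n + k + 1) ≤ Ideal.span {a ^ (k + 1)} * I ^ n ⊔ J * I ^ (n + k) := by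
  obtain ⟨-, n, hn⟩ := h
  refine ⟨n, fun k ↦ ?_⟩
  calc I ^ (n + (k + 1)) = (Ideal.span {a} ⊔ J) ^ (k + 1) * I ^ n :=
        pow_add_eq_pow_mul_of_pow_succ_eq hn _
    _ ≤ (Ideal.span {a} ^ (k + 1) ⊔ J * (Ideal.span {a} ⊔ J) ^ k) * I ^ n := by
        gcongr
        exact sup_pow_succ_le _ _ _
    _ = Ideal.span {a ^ (k + 1)} * I ^ n ⊔ J * I ^ (n + k) := by
        rw [Ideal.sup_mul, Ideal.span_singleton_pow, mul_assoc,
          ← pow_add_eq_pow_mul_of_pow_succ_eq hn]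

theorem of_pow_succ_mem {L : Ideal R} {a : R} (h : IsReduction (Ideal.span {a} ⊔ J) I) (hLI : L ≤ I)
    (hJL : J ≤ L) {N : ℕ} (ha : a ^ (N + 1) ∈ L * I ^ N) : IsReduction L I := by
  obtain ⟨n, hn⟩ := h.exists_pow_le_span_pow_mul_sup
  refine of_pow_le hLI (n := n + N) ((hn N).trans (sup_le ?_ (by gcongr)))
  calc Ideal.span {a ^ (N + 1)} * I ^ n ≤ L * I ^ N * I ^ n := by
        gcongr
        exact (Ideal.span_singleton_le_iff_mem _).mpr ha
    _ = L * I ^ (n + N) := by rw [mul_assoc, ← pow_add, add_comm]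

end IsReduction

end Reduction

section AnalyticSpread

theorem ringKrullDim_le_of_isIntegral_s15 {A B : Type*} [CommRing A] [CommRing B] {f : A →+* B}
    (hf : f.IsIntegral) : ringKrullDim B ≤ ringKrullDim A := by
  let := f.toAlgebra
  refine Order.krullDim_le_of_strictMono (PrimeSpectrum.comap f) fun p q hpq ↦ ?_
  obtain ⟨x, hxq, hxp⟩ := Set.exists_of_ssubset hpq
  exact Ideal.comap_lt_comap_of_integral_mem_sdiff (R := A) hpq.le ⟨hxq, hxp⟩ (hf x)

theorem ringKrullDim_quotient_map_le_of_isIntegral {R A B : Type*} [CommRing R] [CommRing A]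
    [CommRing B] [Algebra R A] [Algebra R B] {f : A →ₐ[R] B} (hf : f.toRingHom.IsIntegral)
    (𝔞 : Ideal R) :
    ringKrullDim (B ⧸ 𝔞.map (algebraMap R B)) ≤ ringKrullDim (A ⧸ 𝔞.map (algebraMap R A)) := by
  have hmap : 𝔞.map (algebraMap R A) ≤ (𝔞.map (algebraMap R B)).comap f.toRingHom := by
    rw [← Ideal.map_le_iff_le_comap, Ideal.map_map, AlgHom.toRingHom_eq_coe, f.comp_algebraMap]
  refine ringKrullDim_le_of_isIntegral_s15 (f := Ideal.quotientMap _ f.toRingHom hmap) ?_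
  refine RingHom.IsIntegral.tower_top (Ideal.Quotient.mk _) _ ?_
  rw [Ideal.quotientMap_comp_mk]
  exact hf.trans _ _ (RingHom.isIntegral_of_surjective _ Ideal.Quotient.mk_surjective)

variable {R : Type*} [CommRing R] {I J : Ideal R}

theorem reesAlgebra_mono (h : J ≤ I) : reesAlgebra J ≤ reesAlgebra I :=
  fun _ hf i ↦ Ideal.pow_right_mono h i (hf i)

theorem IsReduction.isIntegral_reesAlgebra [IsNoetherianRing R] (h : IsReduction J I) {f : R[X]}
    (hf : f ∈ reesAlgebra I) : IsIntegral (reesAlgebra J) f := by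
  obtain ⟨hJI, n, hn⟩ := h
  let F : J.Filtration R :=
    { N := fun i ↦ I ^ i
      mono := fun i ↦ Ideal.pow_le_pow_right i.le_succ
      smul_le := fun i ↦ by
        rw [pow_succ']
        exact Ideal.mul_mono_left hJI }
  have hF : F.submodule.FG :=
    (F.submodule_fg_iff_stable fun _ ↦ IsNoetherian.noetherian _).mpr ⟨n, fun k hk ↦ by
      obtain ⟨l, rfl⟩ := Nat.exists_eq_add_of_le hk
      calc J • I ^ (n + l) = J * I ^ n * I ^ l := by rw [pow_add, smul_eq_mul, mul_assoc]
        _ = I ^ (n + l + 1) := by rw [← hn, ← pow_add, add_right_comm]⟩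
  let S : Subalgebra (reesAlgebra J) R[X] :=
    { reesAlgebra I with algebraMap_mem' := fun y ↦ reesAlgebra_mono hJI y.2 }
  let e := (PolynomialModule.equivPolynomialSelf (R := R)).restrictScalars (reesAlgebra J)
  have hS : F.submodule.map e.toLinearMap = S.toSubmodule := by
    ext f
    rw [Submodule.mem_map_equiv]
    rfl
  exact IsIntegral.of_mem_of_fg S (hS ▸ hF.map e.toLinearMap) f hf

theorem IsReduction.analyticSpread_le [IsNoetherianRing R] [IsLocalRing R] (h : IsReduction J I) :
    analyticSpread R I ≤ analyticSpread R J := by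
  have hJI := reesAlgebra_mono h.1
  refine ringKrullDim_quotient_map_le_of_isIntegral (f := Subalgebra.inclusion hJI) (fun y ↦ ?_) _
  refine RingHom.IsIntegralElem.of_map (g := (reesAlgebra I).val.toRingHom) Subtype.val_injective ?_
  exact h.isIntegral_reesAlgebra y.2

theorem reesAlgebra_span (s : Set R) :
    reesAlgebra (Ideal.span s) = Algebra.adjoin R (Set.range fun x : s ↦ monomial 1 (x : R)) := by
  rw [← adjoin_monomial_eq_reesAlgebra, Ideal.span, Submodule.map_span, Algebra.adjoin_span,
    Set.image_eq_range]

theorem exists_surjective_mvPolynomial_reesAlgebra (s : Set R) :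
    ∃ φ : MvPolynomial s R →ₐ[R] reesAlgebra (Ideal.span s), Function.Surjective φ := by
  rw [reesAlgebra_span, Algebra.adjoin_range_eq_range_aeval]
  exact ⟨_, AlgHom.rangeRestrict_surjective _⟩

theorem analyticSpread_le_spanFinrank [IsLocalRing R] (hJ : J.FG) :
    analyticSpread R J ≤ J.spanFinrank := by
  obtain ⟨s, hs_card, rfl⟩ := Submodule.FG.exists_span_finset_card_eq_spanFinrank hJ
  rw [← hs_card]
  obtain ⟨φ, hφ⟩ := exists_surjective_mvPolynomial_reesAlgebra (s : Set R)
  calc analyticSpread R (Ideal.span (s : Set R))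
      ≤ ringKrullDim (MvPolynomial s R ⧸ (maximalIdeal R).map MvPolynomial.C) :=
        ringKrullDim_quotient_map_le_of_isIntegral (f := φ)
          (RingHom.isIntegral_of_surjective _ hφ) _
    _ = ringKrullDim (MvPolynomial s (ResidueField R)) :=
        (ringKrullDim_eq_of_ringEquiv
          (MvPolynomial.quotientEquivQuotientMvPolynomial (maximalIdeal R)).toRingEquiv).symm
    _ = s.card := by
        rw [MvPolynomial.ringKrullDim_of_isNoetherianRing, ringKrullDim_eq_zero_of_field, zero_add,
          Nat.card_eq_fintype_card, Fintype.card_coe]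

theorem IsReduction.isMinimalReduction_of_spanFinrank_le [IsNoetherianRing R] [IsLocalRing R]
    (h : IsReduction J I) (hJ : J.spanFinrank ≤ analyticSpread R I) : IsMinimalReduction J I := by
  refine ⟨h, fun J' hJ' hle ↦ by_contra fun hne ↦ ?_⟩
  obtain ⟨Q, hQJ', hQ_rank, hJ'Q⟩ :=
    exists_le_sup_smul_spanFinrank_lt (IsNoetherian.noetherian J) (hle.lt_of_ne hne)
  have hQ : IsReduction Q I := hJ'.of_le_sup_maximalIdeal_mul (hQJ'.trans hJ'.1) <|
    hJ'Q.trans (by gcongr; exact Ideal.mul_mono_right h.1)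
  have : (J.spanFinrank : WithBot ℕ∞) ≤ Q.spanFinrank :=
    calc (J.spanFinrank : WithBot ℕ∞) ≤ analyticSpread R I := hJ
      _ ≤ analyticSpread R Q := hQ.analyticSpread_le
      _ ≤ Q.spanFinrank := analyticSpread_le_spanFinrank (IsNoetherian.noetherian Q)
  exact hQ_rank.not_ge (by exact_mod_cast this)

end AnalyticSpread

section AffineBlowup

variable {R : Type*} [CommRing R] {I J : Ideal R} {a : R}

theorem pow_mul_mem_mul_pow (ha : a ∈ I) {n : ℕ} {z : R} (hz : z ∈ J * I ^ n) (k : ℕ) :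
    a ^ k * z ∈ J * I ^ (n + k) := by
  rw [pow_add, ← mul_assoc, mul_comm (a ^ k)]
  exact Ideal.mul_mem_mul hz (Ideal.pow_mem_pow ha k)

/-- The affine blowup algebra `R[I/a] = ⋃ₙ Iⁿ/aⁿ`, for `a ∈ I`, inside the localization `R[1/a]`. -/
def affineBlowup (I : Ideal R) {a : R} (ha : a ∈ I) : Subalgebra R (Localization.Away a) where
  carrier := {x | ∃ n, ∃ z ∈ I ^ n, algebraMap R _ a ^ n * x = algebraMap R _ z}
  mul_mem' := by
    rintro x y ⟨m, z, hz, hx⟩ ⟨n, w, hw, hy⟩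
    refine ⟨m + n, z * w, pow_add I m n ▸ Ideal.mul_mem_mul hz hw, ?_⟩
    rw [pow_add, mul_mul_mul_comm, hx, hy, map_mul]
  add_mem' := by
    rintro x y ⟨m, z, hz, hx⟩ ⟨n, w, hw, hy⟩
    refine ⟨m + n, a ^ n * z + a ^ m * w, ?_, ?_⟩
    · rw [pow_add]
      exact add_mem (Ideal.mul_mem_mul_rev hz (Ideal.pow_mem_pow ha n))
        (Ideal.mul_mem_mul (Ideal.pow_mem_pow ha m) hw)
    · simp only [map_add, map_mul, map_pow]
      linear_combination algebraMap R _ a ^ n * hx + algebraMap R _ a ^ m * hy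
  algebraMap_mem' r := ⟨0, r, by simp⟩

/-- The weak transform `J·R[I/a]/a` of an ideal `J ⊆ I` on the affine blowup algebra: the fractions
`z/aⁿ⁺¹` with `z ∈ J Iⁿ`. -/
def weakTransform (J : Ideal R) (ha : a ∈ I) : Ideal (affineBlowup I ha) where
  carrier := {x | ∃ n, ∃ z ∈ J * I ^ n, algebraMap R _ a ^ (n + 1) * x.1 = algebraMap R _ z}
  zero_mem' := ⟨0, 0, by simp⟩
  add_mem' := by
    rintro x y ⟨m, z, hz, hx⟩ ⟨n, w, hw, hy⟩
    refine ⟨m + (n + 1), a ^ (n + 1) * z + a ^ (m + 1) * w, ?_, ?_⟩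
    · refine add_mem (pow_mul_mem_mul_pow ha hz _) ?_
      rw [add_left_comm, ← add_assoc, add_assoc]
      exact pow_mul_mem_mul_pow ha hw _
    · simp only [map_add, map_mul, map_pow, Subalgebra.coe_add]
      linear_combination algebraMap R _ a ^ (n + 1) * hx + algebraMap R _ a ^ (m + 1) * hy
  smul_mem' := by
    rintro ⟨x, m, z, hz, hx⟩ y ⟨n, w, hw, hy⟩
    refine ⟨m + n, z * w, ?_, ?_⟩
    · rw [pow_add, mul_left_comm]
      exact Ideal.mul_mem_mul hz hw
    · simp only [map_mul, smul_eq_mul, Subalgebra.coe_mul]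
      rw [add_assoc, pow_add, mul_mul_mul_comm, hx, hy]

theorem algebraMap_mul_invSelf_pow_mul (n : ℕ) (x : Localization.Away a) :
    algebraMap R _ a ^ n * (IsLocalization.Away.invSelf a ^ n * x) = x := by
  rw [← mul_assoc, ← mul_pow, IsLocalization.Away.mul_invSelf, one_pow, one_mul]

/-- The fraction `z/aⁿ ∈ R[I/a]` as a linear function of `z` in an ideal `L ⊆ Iⁿ`. -/
noncomputable def blowupFrac (ha : a ∈ I) {n : ℕ} {L : Ideal R} (hL : L ≤ I ^ n) :
    L →ₗ[R] affineBlowup I ha :=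
  LinearMap.codRestrict (Subalgebra.toSubmodule (affineBlowup I ha))
    (LinearMap.mulLeft R (IsLocalization.Away.invSelf a ^ n) ∘ₗ
      Algebra.linearMap R (Localization.Away a) ∘ₗ L.subtype)
    fun z ↦ ⟨n, z, hL z.2, algebraMap_mul_invSelf_pow_mul n _⟩

theorem algebraMap_pow_mul_blowupFrac (ha : a ∈ I) {n : ℕ} {L : Ideal R} (hL : L ≤ I ^ n) (z : L) :
    algebraMap R _ a ^ n * (blowupFrac ha hL z).1 = algebraMap R _ z.1 :=
  algebraMap_mul_invSelf_pow_mul n _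

theorem IsReduction.finite_quotient_weakTransform [IsNoetherianRing R]
    (h : IsReduction (Ideal.span {a} ⊔ J) I) (ha : a ∈ I) :
    Module.Finite R (affineBlowup I ha ⧸ weakTransform J ha) := by
  obtain ⟨n, hn⟩ := h.exists_pow_le_span_pow_mul_sup
  refine Module.Finite.of_surjective
    ((Ideal.Quotient.mkₐ R (weakTransform J ha)).toLinearMap ∘ₗ blowupFrac ha le_rfl (n := n))
    fun y ↦ ?_
  obtain ⟨⟨x, k, z, hz, hxz⟩, rfl⟩ := Ideal.Quotient.mk_surjective y
  have hz' : a ^ (n + 1) * z ∈ I ^ (n + k + 1) := by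
    rw [add_right_comm, pow_add]
    exact Ideal.mul_mem_mul (Ideal.pow_mem_pow ha _) hz
  obtain ⟨_, hu, v, hv, huv⟩ := Submodule.mem_sup.mp (hn k hz')
  obtain ⟨w, hw, rfl⟩ := Ideal.mem_span_singleton_mul.mp hu
  have hfrac := algebraMap_pow_mul_blowupFrac ha le_rfl ⟨w, hw⟩
  replace huv := congrArg (algebraMap R (Localization.Away a)) huv
  simp only [map_add, map_mul, map_pow] at huv
  refine ⟨⟨w, hw⟩, Eq.symm <| Ideal.Quotient.eq.mpr ⟨n + k, v, hv, ?_⟩⟩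
  rw [Subalgebra.coe_sub]
  linear_combination algebraMap R _ a ^ (n + 1) * hxz - algebraMap R _ a ^ (k + 1) * hfrac - huv

theorem exists_mem_pow_mul_eq_of_mem_mul_pow (ha : a ∈ I) {B : Ideal R} (hB : B ≤ I ^ 1)
    {𝔓 : Ideal (affineBlowup I ha)} (h : ∀ x : B, blowupFrac ha hB x ∈ 𝔓) {n : ℕ} {z : R}
    (hz : z ∈ B * I ^ n) : ∃ y ∈ 𝔓, algebraMap R _ a ^ (n + 1) * y.1 = algebraMap R _ z := by
  induction hz using Submodule.mul_induction_on' with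
  | mem_mul_mem x hx w hw =>
    refine ⟨blowupFrac ha le_rfl ⟨w, hw⟩ * blowupFrac ha hB ⟨x, hx⟩, 𝔓.mul_mem_left _ (h _), ?_⟩
    rw [pow_add, Subalgebra.coe_mul, mul_mul_mul_comm, algebraMap_pow_mul_blowupFrac,
      algebraMap_pow_mul_blowupFrac, ← map_mul, mul_comm]
  | add z _ w _ hz hw =>
    obtain ⟨x, hx, hxz⟩ := hz
    obtain ⟨y, hy, hyw⟩ := hw
    exact ⟨x + y, add_mem hx hy, by rw [map_add, ← hxz, ← hyw, ← mul_add, Subalgebra.coe_add]⟩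

theorem IsReduction.exists_blowupFrac_notMem {B : Ideal R} (hB : IsReduction B I) (ha : a ∈ I)
    (hBI : B ≤ I ^ 1) {𝔓 : Ideal (affineBlowup I ha)} (h𝔓 : 𝔓 ≠ ⊤) :
    ∃ x : B, blowupFrac ha hBI x ∉ 𝔓 := by
  by_contra! h
  obtain ⟨-, n, hn⟩ := hB
  obtain ⟨y, hy, hya⟩ :=
    exists_mem_pow_mul_eq_of_mem_mul_pow ha hBI h (hn ▸ Ideal.pow_mem_pow ha (n + 1))
  have hy_one : y = 1 := Subtype.ext <|
    ((IsLocalization.Away.algebraMap_isUnit a).pow (n + 1)).mul_left_cancel <| by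
      rw [hya, map_pow, Subalgebra.coe_one, mul_one]
  exact h𝔓 ((Ideal.eq_top_iff_one _).mpr (hy_one ▸ hy))

theorem exists_pow_succ_mem_of_isUnit (ha : a ∈ I) {x : R} {y : affineBlowup I ha}
    (hxy : algebraMap R _ a * y.1 = algebraMap R _ x)
    (hy : IsUnit (Ideal.Quotient.mk (weakTransform J ha) y)) :
    ∃ n, a ^ (n + 1) ∈ (Ideal.span {x} ⊔ J) * I ^ n := by
  obtain ⟨y', hyy'⟩ := hy.exists_right_inv
  obtain ⟨⟨y', m, z, hz, hyz⟩, rfl⟩ := Ideal.Quotient.mk_surjective y'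
  rw [← map_mul, ← map_one (Ideal.Quotient.mk _), Ideal.Quotient.eq] at hyy'
  obtain ⟨n, w, hw, hyw⟩ := hyy'
  have hfrac : algebraMap R (Localization.Away a) (a ^ (m + n + 1)) =
      algebraMap R _ (a ^ n * (x * z) - a ^ m * w) := by
    simp only [map_sub, map_mul, map_pow, ← hyz, ← hyw, ← hxy, Subalgebra.coe_sub,
      Subalgebra.coe_mul, Subalgebra.coe_one]
    ring
  obtain ⟨k, hk⟩ := IsLocalization.Away.exists_of_eq a hfrac
  refine ⟨k + (m + n), ?_⟩
  have hxz : a ^ (k + n) * (x * z) ∈ Ideal.span {x} * I ^ (k + (m + n)) := by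
    rw [show k + (m + n) = m + (k + n) by omega]
    exact pow_mul_mem_mul_pow ha (Ideal.mul_mem_mul (Ideal.mem_span_singleton_self x) hz) _
  have hw' : a ^ (k + m) * w ∈ J * I ^ (k + (m + n)) := by
    rw [show k + (m + n) = n + (k + m) by omega]
    exact pow_mul_mem_mul_pow ha hw _
  have hpow : a ^ (k + (m + n) + 1) = a ^ (k + n) * (x * z) - a ^ (k + m) * w := by
    rw [add_assoc, pow_add, hk]
    ring
  rw [hpow, Ideal.sup_mul]
  exact Submodule.sub_mem_sup hxz hw'

end AffineBlowup

section Exchange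

variable {R : Type*} [CommRing R] [IsNoetherianRing R] [IsLocalRing R] [Infinite (ResidueField R)]
  {I : Ideal R}

theorem IsReduction.exists_mem_isReduction_span_singleton_sup {J B : Ideal R} {a : R}
    (h : IsReduction (Ideal.span {a} ⊔ J) I) (hB : IsReduction B I) :
    ∃ x ∈ B, IsReduction (Ideal.span {x} ⊔ J) I := by
  obtain ⟨haI, hJI⟩ := sup_le_iff.mp h.1
  have ha : a ∈ I := (Ideal.span_singleton_le_iff_mem _).mp haI
  have hBI : B ≤ I ^ 1 := hB.1.trans (pow_one I).ge
  have := h.finite_quotient_weakTransform ha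
  let f : B →ₗ[R] affineBlowup I ha ⧸ weakTransform J ha :=
    (Ideal.Quotient.mkₐ R (weakTransform J ha)).toLinearMap ∘ₗ blowupFrac ha hBI
  have hf (𝔐 : Ideal (affineBlowup I ha ⧸ weakTransform J ha)) (h𝔐 : 𝔐.IsMaximal) :
      ∃ x, f x ∉ 𝔐 :=
    hB.exists_blowupFrac_notMem ha hBI (Ideal.comap_ne_top (Ideal.Quotient.mk _) h𝔐.ne_top)
  obtain ⟨x, hx⟩ := exists_isUnit_of_forall_isMaximal_exists_notMem
    (A := affineBlowup I ha ⧸ weakTransform J ha) f hf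
  have hfrac := algebraMap_pow_mul_blowupFrac ha hBI x
  rw [pow_one] at hfrac
  obtain ⟨n, hn⟩ := exists_pow_succ_mem_of_isUnit ha hfrac hx
  have hxI : Ideal.span {x.1} ≤ I := (Ideal.span_singleton_le_iff_mem _).mpr (hB.1 x.2)
  exact ⟨x, x.2, h.of_pow_succ_mem (sup_le hxI hJI) le_sup_right hn⟩

theorem exists_exchange_minimal_reductions_general {ι : Type*} [Finite ι]
    (hspread : analyticSpread R I = Nat.card ι) {a : ι → R} {B : Ideal R}
    (ha : IsReduction (Ideal.span (Set.range a)) I) (hB : IsReduction B I) (l : ι) :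
    ∃ x ∈ B, IsMinimalReduction (Ideal.span (insert x (a '' {i | i ≠ l}))) I := by
  have hrange : Set.range a = insert (a l) (a '' {i | i ≠ l}) := by
    rw [← Set.image_insert_eq, ← Set.image_univ]
    congr
    ext i
    simp [em]
  rw [hrange, Ideal.span_insert] at ha
  obtain ⟨x, hxB, hx⟩ := ha.exists_mem_isReduction_span_singleton_sup hB
  rw [← Ideal.span_insert] at hx
  have hcard : (insert x (a '' {i | i ≠ l})).ncard ≤ Nat.card ι :=
    calc (insert x (a '' {i | i ≠ l})).ncard ≤ (a '' {i | i ≠ l}).ncard + 1 :=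
          Set.ncard_insert_le _ _
      _ ≤ ({l}ᶜ : Set ι).ncard + 1 := by gcongr; exact Set.ncard_image_le
      _ = Nat.card ι := by rw [← Set.ncard_singleton l, add_comm, Set.ncard_add_ncard_compl]
  refine ⟨x, hxB, hx.isMinimalReduction_of_spanFinrank_le ?_⟩
  rw [hspread]
  exact_mod_cast (Submodule.spanFinrank_span_le_ncard_of_finite (Set.toFinite _)).trans hcard

end Exchange

/-- Existence form of generic exchange for minimal reductions: some `b ∈ 𝔟`
makes `(a₁,…,a_{d-1},b)` a minimal reduction of `I`. -/
theorem exists_exchange_minimal_reductions (R : Type*) [CommRing R]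
    [IsNoetherianRing R] [IsLocalRing R] [Infinite (IsLocalRing.ResidueField R)]
    (I : Ideal R) (hI : I ≠ ⊤) (d : ℕ) (hd : 0 < d)
    (hspread : analyticSpread R I = d)
    (a b : Fin d → R)
    (ha : IsMinimalReduction (Ideal.span (Set.range a)) I)
    (hb : IsMinimalReduction (Ideal.span (Set.range b)) I) :
    ∃ x ∈ Ideal.span (Set.range b),
      IsMinimalReduction
        (Ideal.span (insert x (a '' {i : Fin d | (i : ℕ) + 1 < d}))) I := by
  have hlast : {i : Fin d | (i : ℕ) + 1 < d} = {i | i ≠ ⟨d - 1, by omega⟩} := by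
    ext i
    simp only [Set.mem_ofPred_eq, ne_eq, Fin.ext_iff]
    omega
  rw [hlast]
  exact exists_exchange_minimal_reductions_general (by simpa using hspread) ha.1 hb.1 _
end

section
/- Let S be a standard ℕⁿ-graded k-algebra over an infinite field k with diagonal subring S^Δ of dimension d ≥ 1, and let {x_{ij}} and {w_{ij}} (1 ≤ i ≤ n, 1 ≤ j ≤ d) be complete reductions of S. Then there is a proper Zariski-closed subset M ⊊ k^d such that for v = (v₁,...,v_d) ∈ k^d, the matrix obtained from {x_{ij}} by replacing its last column with the column (Σ_h v_h w_{ih})ᵢ is a complete reduction of S if and only if v ∉ M. -/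
/-- A complete reduction of type `r` of a standard `ℕⁿ`-graded `k`-algebra `S`
(with grading `𝒜`): an `n × r` matrix `{x_{ij}}` with `x_{ij} ∈ S^{(i)}`
(the degree-`eᵢ` component) such that, with `X_j = ∏ᵢ x_{ij}`, the diagonal
subring `S^Δ = k[S_{(1,…,1)}]` is a finite module over `k[X₁, …, X_r]`. -/
def IsCompleteReduction (k : Type*) {S : Type*} [Field k] [CommRing S]
    [Algebra k S] {n : ℕ} (𝒜 : (Fin n → ℕ) → Submodule k S) {r : ℕ}
    (x : Fin n → Fin r → S) : Prop :=
  (∀ i j, x i j ∈ 𝒜 (Pi.single i 1)) ∧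
  ∃ h : Algebra.adjoin k (Set.range fun j => ∏ i, x i j) ≤
      Algebra.adjoin k (𝒜 (fun _ => 1) : Set S),
    (Subalgebra.inclusion h).toRingHom.Finite

/-!
Dehomogenisation turns the exchange problem into invertibility in a finite-dimensional algebra.
The diagonal subring `S^Δ = k[V]` is generated by its component `V` of degree `1`, so by the
graded Nakayama lemma `S^Δ` is finite over `k[Z]`, for `Z ⊆ V`, if and only if `V` is contained
in the radical of the ideal `(Z)`. Let `I` be the ideal generated by the products `X_j` of the
columns that are kept, `t` the product of the column to be replaced and `y` the product of the
new column, a polynomial function of `v`. As `V ⊆ √(I + (t))`, the new matrix is a complete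
reduction if and only if `t ∈ √(I + (y))`. Since `I + (y)` is homogeneous, this says that
`1 ∈ I + (y) + (t - 1)`, that is, that `y` is a unit of the finite `k`-algebra
`C = S^Δ / (I + (t - 1))`.

So the bad set `M` is the zero locus of `∏ N(y mod 𝔪)`, where `𝔪` runs over the finitely many
maximal ideals of `C` and `N` is the norm from `C / 𝔪` to `k`. No factor is the zero polynomial:
if `y` lay in `𝔪` for all `v`, so would the products `W_h` of the columns of the second
reduction, and since `t ∈ √(W_1, …, W_d)` so would `t`, while `t - 1` is zero in `C`.
-/

open DirectSum

section PolynomialMaps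

variable {k σ : Type*} [Field k]

/-- A map from `k^σ` to a vector space whose coordinates are polynomial functions; coordinates are
tested against all linear functionals, so that no basis has to be chosen. -/
def IsPolynomialMap {M : Type*} [AddCommGroup M] [Module k M] (Y : (σ → k) → M) : Prop :=
  ∀ ℓ : Module.Dual k M, ∃ g : MvPolynomial σ k, ∀ v, MvPolynomial.eval v g = ℓ (Y v)

variable {M N : Type*} [AddCommGroup M] [Module k M] [AddCommGroup N] [Module k N]

theorem IsPolynomialMap.linearMap_comp {Y : (σ → k) → M} (hY : IsPolynomialMap Y) (φ : M →ₗ[k] N) :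
    IsPolynomialMap fun v => φ (Y v) :=
  fun ℓ => hY (ℓ ∘ₗ φ)

theorem isPolynomialMap_sum_eval_smul {ι : Type*} (s : Finset ι) (p : ι → MvPolynomial σ k)
    (c : ι → M) : IsPolynomialMap fun v => ∑ i ∈ s, MvPolynomial.eval v (p i) • c i := by
  intro ℓ
  refine ⟨∑ i ∈ s, p i * MvPolynomial.C (ℓ (c i)), fun v => ?_⟩
  simp [map_sum]

theorem isPolynomialMap_multilinearMap [Fintype σ] {ι : Type*} [Finite ι] {E : ι → Type*}
    [∀ i, AddCommGroup (E i)] [∀ i, Module k (E i)]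
    (φ : MultilinearMap k E N) (w : σ → ∀ i, E i) :
    IsPolynomialMap fun v : σ → k => φ (∑ h, v h • w h) := by
  classical
  have := Fintype.ofFinite ι
  have expand (v : σ → k) : φ (∑ h, v h • w h) =
      ∑ s : ι → σ, MvPolynomial.eval v (∏ i, MvPolynomial.X (s i)) • φ fun i => w (s i) i := by
    have hsum : ∑ h, v h • w h = fun i => ∑ h, v h • w h i := by
      ext i
      simp
    rw [hsum, φ.map_sum]
    simp [φ.map_smul_univ]
  simpa only [expand] using isPolynomialMap_sum_eval_smul Finset.univ _ _

variable {C : Type*} [CommRing C] [Algebra k C] [Module.Finite k C]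

theorem IsPolynomialMap.exists_eval_eq_norm {Y : (σ → k) → C} (hY : IsPolynomialMap Y) :
    ∃ g : MvPolynomial σ k, ∀ v, MvPolynomial.eval v g = Algebra.norm k (Y v) := by
  let b := Module.finBasis k C
  choose g hg using fun i j => hY (b.coord i ∘ₗ LinearMap.mulRight k (b j))
  refine ⟨(Matrix.of g).det, fun v => ?_⟩
  rw [Algebra.norm_eq_matrix_det b, RingHom.map_det]
  congr 1
  ext i j
  simp [hg, Algebra.leftMulMatrix_eq_repr_mul]

theorem isUnit_iff_forall_maximalSpectrum_norm_ne_zero (y : C) :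
    IsUnit y ↔ ∀ 𝔪 : MaximalSpectrum C,
      Algebra.norm k (Ideal.Quotient.mk 𝔪.asIdeal y) ≠ 0 := by
  have norm_ne_zero_iff (𝔪 : MaximalSpectrum C) :
      Algebra.norm k (Ideal.Quotient.mk 𝔪.asIdeal y) ≠ 0 ↔ y ∉ 𝔪.asIdeal := by
    have := 𝔪.isMaximal
    rw [Algebra.norm_ne_zero_iff, Ne, Ideal.Quotient.eq_zero_iff_mem]
  simp only [norm_ne_zero_iff]
  refine ⟨fun hy 𝔪 hmem => 𝔪.isMaximal.ne_top (Ideal.eq_top_of_isUnit_mem _ hmem hy), fun h => ?_⟩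
  by_contra hy
  obtain ⟨𝔪, h𝔪, hmem⟩ := exists_max_ideal_of_mem_nonunits hy
  exact h ⟨𝔪, h𝔪⟩ hmem

theorem IsPolynomialMap.exists_eval_ne_zero_iff_isUnit {Y : (σ → k) → C} (hY : IsPolynomialMap Y)
    (hne : ∀ 𝔪 : MaximalSpectrum C, ∃ v, Y v ∉ 𝔪.asIdeal) :
    ∃ f : MvPolynomial σ k, f ≠ 0 ∧ ∀ v, MvPolynomial.eval v f ≠ 0 ↔ IsUnit (Y v) := by
  have : IsArtinianRing C := IsArtinianRing.of_finite k C
  have := Fintype.ofFinite (MaximalSpectrum C)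
  choose g hg using fun 𝔪 : MaximalSpectrum C =>
    (hY.linearMap_comp (Ideal.Quotient.mkₐ k 𝔪.asIdeal).toLinearMap).exists_eval_eq_norm
  refine ⟨∏ 𝔪, g 𝔪, Finset.prod_ne_zero_iff.mpr fun 𝔪 _ h0 => ?_, fun v => ?_⟩
  · obtain ⟨v, hv⟩ := hne 𝔪
    have := 𝔪.isMaximal
    have h := hg 𝔪 v
    rw [h0, map_zero, eq_comm, Algebra.norm_eq_zero_iff] at h
    exact hv (Ideal.Quotient.eq_zero_iff_mem.mp h)
  · rw [map_prod, Finset.prod_ne_zero_iff, isUnit_iff_forall_maximalSpectrum_norm_ne_zero (k := k)]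
    simp [hg]

end PolynomialMaps

section QuotientsAndSubalgebras

variable {R : Type*} [CommRing R]

theorem isUnit_quotient_mk_iff_sup_span_eq_top {J : Ideal R} {y : R} :
    IsUnit (Ideal.Quotient.mk J y) ↔ J ⊔ Ideal.span {y} = ⊤ := by
  rw [← Ideal.span_singleton_eq_top, ← Set.image_singleton, ← Ideal.map_span,
    ← Ideal.comap_eq_top_iff (f := Ideal.Quotient.mk J),
    Ideal.comap_map_of_surjective' _ Ideal.Quotient.mk_surjective, Ideal.mk_ker, sup_comm]

theorem sup_span_sub_one_eq_top_of_mem_radical {K : Ideal R} {t : R} (ht : t ∈ K.radical) :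
    K ⊔ Ideal.span {t - 1} = ⊤ := by
  obtain ⟨m, hm⟩ := ht
  have hdvd : t ^ m - 1 ∈ Ideal.span {t - 1} :=
    Ideal.mem_span_singleton.mpr (sub_one_dvd_pow_sub_one t m)
  have hone := sub_mem (Ideal.mem_sup_left hm) (Ideal.mem_sup_right hdvd)
  rwa [sub_sub_cancel, ← Ideal.eq_top_iff_one] at hone

section Update

variable {ι : Type*} [DecidableEq ι] {F : ι → R} {j₀ : ι}

theorem span_range_update (y : R) :
    Ideal.span (Set.range (Function.update F j₀ y)) =
      Ideal.span (F '' {j₀}ᶜ) ⊔ Ideal.span {y} := by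
  have image_update : Function.update F j₀ y '' {j₀}ᶜ = F '' {j₀}ᶜ :=
    Set.image_congr fun j hj => Function.update_of_ne hj y F
  rw [← Ideal.span_union, ← Set.image_univ, ← Set.compl_union_self {j₀}, Set.image_union,
    Set.image_singleton, Function.update_self, image_update]

theorem subset_radical_span_range_update_iff {V : Set R} (hmem : F j₀ ∈ V)
    (hV : V ⊆ (Ideal.span (Set.range F)).radical) (y : R) :
    V ⊆ (Ideal.span (Set.range (Function.update F j₀ y))).radical ↔
      F j₀ ∈ (Ideal.span (F '' {j₀}ᶜ) ⊔ Ideal.span {y}).radical := by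
  rw [span_range_update]
  refine ⟨fun h => h hmem, fun h => hV.trans (Ideal.radical_le_radical_iff.mpr ?_)⟩
  rw [Ideal.span_le, Set.range_subset_iff]
  intro j
  obtain rfl | hj := eq_or_ne j j₀
  · exact h
  · exact Ideal.le_radical (Ideal.mem_sup_left (Ideal.subset_span (Set.mem_image_of_mem F hj)))

end Update

variable {k : Type*} [CommRing k] [Algebra k R]

theorem finiteType_of_finite_adjoin {Z : Set R} (hZ : Z.Finite)
    [Module.Finite (Algebra.adjoin k Z) R] : Algebra.FiniteType k R :=
  have : Algebra.FiniteType k (Algebra.adjoin k Z) :=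
    (Subalgebra.fg_iff_finiteType _).mp ⟨hZ.toFinset, by rw [hZ.coe_toFinset]⟩
  this.trans inferInstance

theorem finite_adjoin_of_subset {Z Z' : Set R} (hZ : Z ⊆ Z')
    [Module.Finite (Algebra.adjoin k Z) R] : Module.Finite (Algebra.adjoin k Z') R :=
  RingHom.finite_algebraMap.mp <| RingHom.Finite.of_comp_finite
    (f := (Subalgebra.inclusion (Algebra.adjoin_mono hZ)).toRingHom)
    (RingHom.finite_algebraMap.mpr ‹Module.Finite (Algebra.adjoin k Z) R›)

theorem finite_quotient_of_forall_mem_bot {Z : Set R} [Module.Finite (Algebra.adjoin k Z) R]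
    {J : Ideal R} (hZ : ∀ z ∈ Z, Ideal.Quotient.mk J z ∈ (⊥ : Subalgebra k (R ⧸ J))) :
    Module.Finite k (R ⧸ J) := by
  let π := (Ideal.Quotient.mkₐ k J).comp (Algebra.adjoin k Z).val
  have hπ : π.range ≤ ⊥ := by
    rw [AlgHom.range_comp, Subalgebra.range_val, AlgHom.map_adjoin, Algebra.adjoin_le_iff]
    rintro _ ⟨z, hz, rfl⟩
    exact hZ z hz
  have hfinite : ((Ideal.Quotient.mk J).comp (algebraMap (Algebra.adjoin k Z) R)).Finite :=
    (RingHom.Finite.of_surjective _ Ideal.Quotient.mk_surjective).comp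
      (RingHom.finite_algebraMap.mpr inferInstance)
  have : Module.Finite (⊥ : Subalgebra k (R ⧸ J)) (R ⧸ J) :=
    RingHom.finite_algebraMap.mp <| RingHom.Finite.of_comp_finite
      (f := ((Subalgebra.inclusion hπ).comp π.rangeRestrict).toRingHom) hfinite
  exact Module.Finite.trans (⊥ : Subalgebra k (R ⧸ J)) (R ⧸ J)

theorem finite_quotient_sup_span_sub_one {ι : Type*} (F : ι → R) (j₀ : ι)
    [Module.Finite (Algebra.adjoin k (Set.range F)) R] :
    Module.Finite k (R ⧸ Ideal.span (F '' {j₀}ᶜ) ⊔ Ideal.span {F j₀ - 1}) := by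
  refine finite_quotient_of_forall_mem_bot (Z := Set.range F) (Set.forall_mem_range.mpr fun j => ?_)
  set J := Ideal.span (F '' {j₀}ᶜ) ⊔ Ideal.span {F j₀ - 1}
  obtain rfl | hj := eq_or_ne j j₀
  · have mk_eq_one : Ideal.Quotient.mk J (F j) = 1 :=
      Ideal.Quotient.eq.mpr (Ideal.mem_sup_right (Ideal.mem_span_singleton_self _))
    exact mk_eq_one ▸ one_mem _
  · have mk_eq_zero : Ideal.Quotient.mk J (F j) = 0 :=
      Ideal.Quotient.eq_zero_iff_mem.mpr
        (Ideal.mem_sup_left (Ideal.subset_span (Set.mem_image_of_mem F hj)))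
    exact mk_eq_zero ▸ zero_mem _

theorem finite_inclusion_map_val_iff {T : Subalgebra k R} {A : Subalgebra k T}
    (h : A.map T.val ≤ T) :
    (Subalgebra.inclusion h).toRingHom.Finite ↔ Module.Finite A T := by
  let f := A.equivMapOfInjective T.val Subtype.val_injective
  have comp_eq : (Subalgebra.inclusion h).toRingHom.comp f.toAlgHom.toRingHom = algebraMap A T :=
    rfl
  rw [← RingHom.finite_algebraMap, ← comp_eq]
  exact ⟨fun hfin => hfin.comp (.of_surjective _ f.surjective), RingHom.Finite.of_comp_finite⟩

end QuotientsAndSubalgebras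

section GradedRings

variable {σ R : Type*} [CommRing R] [SetLike σ R] [AddSubgroupClass σ R] (ℬ : ℕ → σ) [GradedRing ℬ]

theorem mem_radical_of_sup_span_sub_one_eq_top {K : Ideal R} (hK : K.IsHomogeneous ℬ) {i : ℕ}
    (hi : i ≠ 0) {t : R} (ht : t ∈ ℬ i) (htop : K ⊔ Ideal.span {t - 1} = ⊤) : t ∈ K.radical := by
  obtain ⟨a, ha, b, hb, hab⟩ := Submodule.mem_sup.mp ((Ideal.eq_top_iff_one _).mp htop)
  obtain ⟨c, rfl⟩ := Ideal.mem_span_singleton'.mp hb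
  have component_one (m : ℕ) : (decompose ℬ (1 : R) m : R) =
      decompose ℬ a m + (decompose ℬ (c * t) m - decompose ℬ c m) := by
    rw [← hab, mul_sub, mul_one, decompose_add, decompose_sub]
    rfl
  have pow_add_component_mem (m : ℕ) : t ^ m + decompose ℬ c (m * i) ∈ K := by
    induction m with
    | zero =>
      have h := component_one 0
      rw [coe_decompose_mul_of_right_mem_of_not_le ℬ ht (by lia),
        decompose_of_mem_same ℬ SetLike.GradedOne.one_mem] at h
      rw [zero_mul, pow_zero, h, zero_sub, neg_add_cancel_right]
      exact hK 0 ha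
    | succ m ih =>
      have h := component_one ((m + 1) * i)
      rw [coe_decompose_mul_of_right_mem_of_le ℬ ht (Nat.le_mul_of_pos_left i m.succ_pos),
        decompose_of_mem_ne ℬ SetLike.GradedOne.one_mem (by positivity),
        Nat.succ_mul, Nat.add_sub_cancel] at h
      convert add_mem (K.mul_mem_left t ih) (hK ((m + 1) * i) ha) using 1
      rw [Nat.succ_mul]
      linear_combination h
  classical
  obtain ⟨m, hm⟩ := Infinite.exists_notMem_finset
    ((decompose ℬ c).support.preimage (· * i) (mul_left_injective₀ hi).injOn)
  have component_eq_zero : (decompose ℬ c (m * i) : R) = 0 := by simpa using hm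
  exact ⟨m, by simpa [component_eq_zero] using pow_add_component_mem m⟩

theorem mem_radical_iff_sup_span_sub_one_eq_top {K : Ideal R} (hK : K.IsHomogeneous ℬ) {i : ℕ}
    (hi : i ≠ 0) {t : R} (ht : t ∈ ℬ i) : t ∈ K.radical ↔ K ⊔ Ideal.span {t - 1} = ⊤ :=
  ⟨sup_span_sub_one_eq_top_of_mem_radical, mem_radical_of_sup_span_sub_one_eq_top ℬ hK hi ht⟩

end GradedRings

section GradedAlgebras

variable {k R : Type*} [CommRing k] [CommRing R] [Algebra k R] (ℬ : ℕ → Submodule k R)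
  [GradedAlgebra ℬ]

theorem mem_radical_of_isIntegral {K : Ideal R} (hK : K.IsHomogeneous ℬ) {i : ℕ} (hi : i ≠ 0)
    {r : R} (hr : r ∈ ℬ i) (hintegral : IsIntegral k (Ideal.Quotient.mk K r)) : r ∈ K.radical := by
  obtain ⟨p, hp, hroot⟩ := hintegral
  set N := p.natDegree with hN
  have aeval_mem : r ^ N + ∑ j ∈ Finset.range N, p.coeff j • r ^ j ∈ K := by
    have aeval_eq : Polynomial.aeval r p = r ^ N + ∑ j ∈ Finset.range N, p.coeff j • r ^ j := by
      conv_lhs => rw [hp.as_sum]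
      simp [Algebra.smul_def, hN]
    rw [← Ideal.Quotient.eq_zero_iff_mem, ← aeval_eq]
    exact (Polynomial.aeval_algHom_apply (Ideal.Quotient.mkₐ k K) r p).symm.trans hroot
  have lower_component (j : ℕ) (hj : j ∈ Finset.range N) :
      GradedAlgebra.proj ℬ (N * i) (p.coeff j • r ^ j) = 0 :=
    decompose_of_mem_ne ℬ (Submodule.smul_mem _ _ (SetLike.pow_mem_graded j hr))
      ((mul_left_injective₀ hi).ne (Finset.mem_range.mp hj).ne)
  have component_eq : GradedAlgebra.proj ℬ (N * i)
      (r ^ N + ∑ j ∈ Finset.range N, p.coeff j • r ^ j) = r ^ N := by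
    rw [map_add, map_sum, Finset.sum_eq_zero lower_component, add_zero]
    exact decompose_of_mem_same ℬ (SetLike.pow_mem_graded N hr)
  exact ⟨N, component_eq ▸ hK (N * i) aeval_mem⟩

variable {Z T : Set R}

theorem component_mem_of_mem_span (hZ : ∀ z ∈ Z, ∃ i ≠ 0, z ∈ ℬ i)
    {N : Submodule (Algebra.adjoin k Z) R} {l : ℕ} (hN : ∀ m < l, ∀ r ∈ ℬ m, r ∈ N) {b : R}
    (hb : b ∈ Ideal.span Z) : (decompose ℬ b l : R) ∈ N := by
  induction hb using Submodule.closure_induction with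
  | zero => simp
  | add x y _ _ hx hy =>
    rw [decompose_add]
    exact add_mem hx hy
  | smul_mem r z hz =>
    obtain ⟨i, hi, hzi⟩ := hZ z hz
    rw [smul_eq_mul]
    obtain hil | hil := le_or_gt i l
    · rw [coe_decompose_mul_of_right_mem_of_le ℬ hzi hil, mul_comm]
      exact N.smul_mem ⟨z, Algebra.subset_adjoin hz⟩ (hN (l - i) (by lia) _ (SetLike.coe_mem _))
    · rw [coe_decompose_mul_of_right_mem_of_not_le ℬ hzi hil.not_ge]
      exact zero_mem N

theorem component_mem_span (hT : ∀ τ ∈ T, SetLike.IsHomogeneousElem ℬ τ) {a : R}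
    (ha : a ∈ Submodule.span k T) (l : ℕ) : (decompose ℬ a l : R) ∈ Submodule.span k T := by
  suffices Submodule.span k T ≤ (Submodule.span k T).comap (GradedAlgebra.proj ℬ l) from this ha
  refine Submodule.span_le.mpr fun τ hτ => ?_
  obtain ⟨i, hi⟩ := hT τ hτ
  change (decompose ℬ τ l : R) ∈ Submodule.span k T
  obtain rfl | hne := eq_or_ne i l
  · rw [decompose_of_mem_same ℬ hi]
    exact Submodule.subset_span hτ
  · rw [decompose_of_mem_ne ℬ hi hne]
    exact zero_mem _

theorem span_adjoin_eq_top_of_sup_eq_top (hZ : ∀ z ∈ Z, ∃ i ≠ 0, z ∈ ℬ i)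
    (hT : ∀ τ ∈ T, SetLike.IsHomogeneousElem ℬ τ)
    (htop : Submodule.span k T ⊔ (Ideal.span Z).restrictScalars k = ⊤) :
    Submodule.span (Algebra.adjoin k Z) T = ⊤ := by
  set N := Submodule.span (Algebra.adjoin k Z) T
  have hTN : Submodule.span k T ≤ N.restrictScalars k := Submodule.span_le_restrictScalars k _ T
  have homogeneous_mem (l : ℕ) : ∀ r ∈ ℬ l, r ∈ N := by
    induction l using Nat.strong_induction_on with
    | _ l ih =>
      intro r hr
      obtain ⟨a, ha, b, hb, rfl⟩ := Submodule.mem_sup.mp (htop ▸ Submodule.mem_top (x := r))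
      rw [← decompose_of_mem_same ℬ hr, decompose_add]
      exact add_mem (hTN (component_mem_span ℬ hT ha l)) (component_mem_of_mem_span ℬ hZ ih hb)
  refine (Submodule.eq_top_iff').mpr fun r => ?_
  classical
  rw [← sum_support_decompose ℬ r]
  exact sum_mem fun l _ => homogeneous_mem l _ (SetLike.coe_mem _)

theorem span_isHomogeneousElem_eq_top :
    Submodule.span k {r | SetLike.IsHomogeneousElem ℬ r} = ⊤ := by
  classical
  refine (Submodule.eq_top_iff').mpr fun r => ?_
  rw [← sum_support_decompose ℬ r]
  exact sum_mem fun l _ => Submodule.subset_span ⟨l, SetLike.coe_mem _⟩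

theorem finite_adjoin_of_finite_quotient (hZ : ∀ z ∈ Z, ∃ i ≠ 0, z ∈ ℬ i)
    [Module.Finite k (R ⧸ Ideal.span Z)] : Module.Finite (Algebra.adjoin k Z) R := by
  classical
  let π := (Ideal.Quotient.mkₐ k (Ideal.span Z)).toLinearMap
  have range_π : LinearMap.range π = ⊤ := LinearMap.range_eq_top.mpr Ideal.Quotient.mk_surjective
  have ker_π : LinearMap.ker π = (Ideal.span Z).restrictScalars k := by
    ext r
    exact Ideal.Quotient.eq_zero_iff_mem
  have span_image_eq_top : Submodule.span k (π '' {r | SetLike.IsHomogeneousElem ℬ r}) = ⊤ := by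
    rw [Submodule.span_image, span_isHomogeneousElem_eq_top, Submodule.map_top, range_π]
  obtain ⟨T', hT', hspan⟩ := (Submodule.fg_span_iff_fg_span_finset_subset _).mp
    (span_image_eq_top ▸ Module.Finite.fg_top)
  obtain ⟨T, hT, rfl⟩ := Finset.subset_set_image_iff.mp hT'
  rw [span_image_eq_top, Finset.coe_image, Submodule.span_image, eq_comm,
    LinearMap.map_eq_top_iff range_π, ker_π] at hspan
  exact ⟨⟨T, span_adjoin_eq_top_of_sup_eq_top ℬ hZ hT hspan⟩⟩

theorem finite_adjoin_iff_subset_radical [Algebra.FiniteType k R]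
    (hℬ : Algebra.adjoin k (ℬ 1 : Set R) = ⊤) (hZ : Z ⊆ ℬ 1) :
    Module.Finite (Algebra.adjoin k Z) R ↔ (ℬ 1 : Set R) ⊆ (Ideal.span Z).radical := by
  constructor
  · intro _ r hr
    have hfinite : Module.Finite k (R ⧸ Ideal.span Z) := by
      refine finite_quotient_of_forall_mem_bot (Z := Z) fun z hz => ?_
      rw [Ideal.Quotient.eq_zero_iff_mem.mpr (Ideal.subset_span hz)]
      exact zero_mem _
    have hhomogeneous : (Ideal.span Z).IsHomogeneous ℬ :=
      Ideal.homogeneous_span ℬ Z fun z hz => ⟨1, hZ hz⟩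
    exact mem_radical_of_isIntegral ℬ hhomogeneous one_ne_zero hr (Algebra.IsIntegral.isIntegral _)
  · intro hle
    have hintegral : Algebra.IsIntegral k (R ⧸ Ideal.span Z) := by
      let π := Ideal.Quotient.mkₐ k (Ideal.span Z)
      have range_le : (⊤ : Subalgebra k R) ≤ (integralClosure k _).comap π := by
        rw [← hℬ, Algebra.adjoin_le_iff]
        intro r hr
        obtain ⟨m, hm⟩ := hle hr
        have hpow : π r ^ (m + 1) = 0 := by
          rw [← map_pow]
          exact Ideal.Quotient.eq_zero_iff_mem.mpr (Ideal.pow_mem_of_pow_mem _ hm m.le_succ)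
        exact .of_pow m.succ_pos (hpow ▸ isIntegral_zero)
      exact ⟨Ideal.Quotient.mk_surjective.forall.mpr fun r => range_le Algebra.mem_top⟩
    have := Algebra.IsIntegral.finite (R := k) (A := R ⧸ Ideal.span Z)
    exact finite_adjoin_of_finite_quotient ℬ fun z hz => ⟨1, one_ne_zero, hZ hz⟩

end GradedAlgebras

theorem exists_eval_ne_zero_iff_mem_radical {k R σ : Type*} [Field k] [CommRing R]
    [Algebra k R] (ℬ : ℕ → Submodule k R) [GradedAlgebra ℬ] {I : Ideal R}
    (hI : I.IsHomogeneous ℬ) {i : ℕ} (hi : i ≠ 0) {t : R} (ht : t ∈ ℬ i)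
    [Module.Finite k (R ⧸ I ⊔ Ideal.span {t - 1})] {Y : (σ → k) → R} (hY : IsPolynomialMap Y)
    (hYhom : ∀ v, SetLike.IsHomogeneousElem ℬ (Y v))
    (htY : t ∈ (Ideal.span (Set.range Y)).radical) :
    ∃ f : MvPolynomial σ k, f ≠ 0 ∧
      ∀ v, MvPolynomial.eval v f ≠ 0 ↔ t ∈ (I ⊔ Ideal.span {Y v}).radical := by
  set J := I ⊔ Ideal.span {t - 1}
  have exists_notMem (𝔪 : MaximalSpectrum (R ⧸ J)) :
      ∃ v, Ideal.Quotient.mkₐ k J (Y v) ∉ 𝔪.asIdeal := by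
    by_contra! hmem
    have := 𝔪.isMaximal
    have hspan : Ideal.span (Set.range Y) ≤ 𝔪.asIdeal.comap (Ideal.Quotient.mk J) :=
      Ideal.span_le.mpr (Set.range_subset_iff.mpr hmem)
    have htop : (⊤ : Ideal R) ≤ 𝔪.asIdeal.comap (Ideal.Quotient.mk J) := by
      rw [← sup_span_sub_one_eq_top_of_mem_radical htY]
      refine sup_le hspan ?_
      exact (le_sup_right.trans Ideal.mk_ker.ge).trans (Ideal.ker_le_comap _)
    exact (Ideal.comap_ne_top _ 𝔪.isMaximal.ne_top) (top_le_iff.mp htop)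
  obtain ⟨f, hf, hunit⟩ := (hY.linearMap_comp
    (Ideal.Quotient.mkₐ k J).toLinearMap).exists_eval_ne_zero_iff_isUnit exists_notMem
  refine ⟨f, hf, fun v => (hunit v).trans ?_⟩
  have hK : (I ⊔ Ideal.span {Y v}).IsHomogeneous ℬ :=
    hI.sup (Ideal.homogeneous_span ℬ _ (by simpa using hYhom v))
  rw [mem_radical_iff_sup_span_sub_one_eq_top ℬ hK hi ht, sup_right_comm]
  exact isUnit_quotient_mk_iff_sup_span_eq_top

theorem exists_eval_ne_zero_iff_finite_adjoin_update {k R σ ι : Type*} [Field k] [CommRing R]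
    [Algebra k R] (ℬ : ℕ → Submodule k R) [GradedAlgebra ℬ]
    (hℬ : Algebra.adjoin k (ℬ 1 : Set R) = ⊤) [Finite ι] [DecidableEq ι] {F : ι → R}
    (hF : ∀ j, F j ∈ ℬ 1) [Module.Finite (Algebra.adjoin k (Set.range F)) R] (j₀ : ι)
    {Y : (σ → k) → R} (hY : IsPolynomialMap Y) (hYhom : ∀ v, Y v ∈ ℬ 1)
    [Module.Finite (Algebra.adjoin k (Set.range Y)) R] :
    ∃ f : MvPolynomial σ k, f ≠ 0 ∧ ∀ v, MvPolynomial.eval v f ≠ 0 ↔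
      Module.Finite (Algebra.adjoin k (Set.range (Function.update F j₀ (Y v)))) R := by
  have := finiteType_of_finite_adjoin (k := k) (Set.finite_range F)
  have finite_adjoin_iff {Z : Set R} (hZ : Z ⊆ ℬ 1) := finite_adjoin_iff_subset_radical ℬ hℬ hZ
  have hFrad := (finite_adjoin_iff (Set.range_subset_iff.mpr hF)).mp inferInstance
  have hYrad := (finite_adjoin_iff (Set.range_subset_iff.mpr hYhom)).mp inferInstance
  have hI : (Ideal.span (F '' {j₀}ᶜ)).IsHomogeneous ℬ :=
    Ideal.homogeneous_span _ _ (Set.forall_mem_image.mpr fun j _ => ⟨1, hF j⟩)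
  have := finite_quotient_sup_span_sub_one (k := k) F j₀
  obtain ⟨f, hf, hfv⟩ := exists_eval_ne_zero_iff_mem_radical ℬ hI one_ne_zero (hF j₀) hY
    (fun v => ⟨1, hYhom v⟩) (hYrad (hF j₀))
  refine ⟨f, hf, fun v => (hfv v).trans ?_⟩
  have range_update_subset : Set.range (Function.update F j₀ (Y v)) ⊆ ℬ 1 := by
    rw [Set.range_subset_iff, Function.forall_update_iff (p := fun _ r => r ∈ (ℬ 1 : Set R))]
    exact ⟨hYhom v, fun j _ => hF j⟩
  rw [finite_adjoin_iff range_update_subset, subset_radical_span_range_update_iff (hF j₀) hFrad]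

section RayGrading

variable {k S M : Type*} [CommRing k] [CommRing S] [Algebra k S] [AddMonoid M]

/-- For an algebra `S` graded by `M` and a degree `e : M`, the grading of the subalgebra generated
by the component of degree `e` in which degree `m` is given to elements of `M`-degree `m • e`. -/
def rayGrading (𝒜 : M → Submodule k S) (e : M) (m : ℕ) :
    Submodule k (Algebra.adjoin k (𝒜 e : Set S)) :=
  (𝒜 (m • e)).comap (Algebra.adjoin k (𝒜 e : Set S)).val.toLinearMap

theorem mem_rayGrading_one {𝒜 : M → Submodule k S} {e : M}
    {s : Algebra.adjoin k (𝒜 e : Set S)} : s ∈ rayGrading 𝒜 e 1 ↔ (s : S) ∈ 𝒜 e := by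
  simp [rayGrading]

theorem adjoin_rayGrading_one (𝒜 : M → Submodule k S) (e : M) :
    Algebra.adjoin k (rayGrading 𝒜 e 1 : Set (Algebra.adjoin k (𝒜 e : Set S))) = ⊤ := by
  rw [← Algebra.adjoin_adjoin_coe_preimage (s := (𝒜 e : Set S))]
  congr 1
  ext s
  exact mem_rayGrading_one

variable [DecidableEq M] (𝒜 : M → Submodule k S) [GradedAlgebra 𝒜] (e : M)

instance rayGrading.gradedMonoid : SetLike.GradedMonoid (rayGrading 𝒜 e) where
  one_mem := by
    change (1 : S) ∈ 𝒜 (0 • e)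
    rw [zero_nsmul]
    exact SetLike.GradedOne.one_mem
  mul_mem i j r s hr hs := by
    change (r * s : S) ∈ 𝒜 ((i + j) • e)
    rw [add_nsmul]
    exact SetLike.GradedMul.mul_mem hr hs

theorem iSup_rayGrading_eq_top : ⨆ m, rayGrading 𝒜 e m = ⊤ := by
  rw [Submodule.iSup_eq_toSubmodule_range, ← Algebra.top_toSubmodule]
  refine congrArg Subalgebra.toSubmodule (top_le_iff.mp ?_)
  rw [← adjoin_rayGrading_one, Algebra.adjoin_le_iff]
  intro s hs
  exact ⟨DirectSum.of (fun m => rayGrading 𝒜 e m) 1 ⟨s, hs⟩, DirectSum.coeAlgHom_of _ _ _⟩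

theorem iSupIndep_rayGrading (he : Function.Injective fun m : ℕ => m • e) :
    iSupIndep (rayGrading 𝒜 e) := by
  let ι := (Algebra.adjoin k (𝒜 e : Set S)).val.toLinearMap
  have hindep : iSupIndep fun m => (rayGrading 𝒜 e m).map ι :=
    ((Decomposition.isInternal 𝒜).submodule_iSupIndep.comp he).mono
      fun m => Submodule.map_comap_le _ _
  intro m
  rw [Submodule.disjoint_def]
  intro s hm hne
  have hdisjoint := Submodule.disjoint_def.mp (hindep m) (ι s) (Submodule.mem_map_of_mem hm)
  simp only [← Submodule.map_iSup] at hdisjoint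
  exact Subtype.ext (hdisjoint (Submodule.mem_map_of_mem hne))

theorem isInternal_rayGrading (he : Function.Injective fun m : ℕ => m • e) :
    DirectSum.IsInternal (rayGrading 𝒜 e) :=
  DirectSum.isInternal_submodule_of_iSupIndep_of_iSup_eq_top (iSupIndep_rayGrading 𝒜 e he)
    (iSup_rayGrading_eq_top 𝒜 e)

end RayGrading

section CompleteReductions

variable {k S : Type*} [Field k] [CommRing S] [Algebra k S] {n : ℕ}
  (𝒜 : (Fin n → ℕ) → Submodule k S)

/-- The diagonal subring `S^Δ` of an `ℕⁿ`-graded algebra, generated by the component of degree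
`(1, …, 1)`. -/
abbrev diagonalSubalgebra : Subalgebra k S := Algebra.adjoin k (𝒜 fun _ => 1 : Set S)

variable [GradedAlgebra 𝒜]

theorem prod_mem_diagonal (y : ∀ i, 𝒜 (Pi.single i 1)) : ∏ i, (y i : S) ∈ 𝒜 fun _ => 1 := by
  have h := SetLike.prod_mem_graded (A := 𝒜) (F := Finset.univ) (i := fun i => Pi.single i 1)
    (g := fun i => (y i : S)) fun i _ => (y i).2
  rwa [Finset.univ_sum_single] at h

/-- The product `X = ∏ᵢ xᵢ ∈ S^Δ` of a column of elements `xᵢ ∈ S^{(i)}`, as a multilinear function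
of the column. -/
def diagonalProd : MultilinearMap k (fun i => 𝒜 (Pi.single i 1)) (diagonalSubalgebra 𝒜) :=
  ((MultilinearMap.mkPiAlgebra k (Fin n) S).compLinearMap fun i =>
    (𝒜 (Pi.single i 1)).subtype).codRestrict (Subalgebra.toSubmodule (diagonalSubalgebra 𝒜))
      fun y => Algebra.subset_adjoin (prod_mem_diagonal 𝒜 y)

theorem diagonalProd_mem_rayGrading (y : ∀ i, 𝒜 (Pi.single i 1)) :
    diagonalProd 𝒜 y ∈ rayGrading 𝒜 (fun _ => 1) 1 :=
  mem_rayGrading_one.mpr (prod_mem_diagonal 𝒜 y)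

noncomputable instance diagonalSubalgebra.gradedAlgebra [NeZero n] :
    GradedAlgebra (rayGrading 𝒜 fun _ => 1) :=
  (isInternal_rayGrading 𝒜 (fun _ => 1) fun l m h => by
    simpa using congrFun h (0 : Fin n)).gradedAlgebra

variable {𝒜} {r e : ℕ}

theorem isCompleteReduction_iff_finite (X : Fin r → ∀ i, 𝒜 (Pi.single i 1)) :
    IsCompleteReduction k 𝒜 (fun i j => (X j i : S)) ↔
      Module.Finite (Algebra.adjoin k (Set.range (diagonalProd 𝒜 ∘ X)))
        (diagonalSubalgebra 𝒜) := by
  have adjoin_eq : Algebra.adjoin k (Set.range fun j => ∏ i, (X j i : S)) =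
      (Algebra.adjoin k (Set.range (diagonalProd 𝒜 ∘ X))).map (diagonalSubalgebra 𝒜).val := by
    rw [AlgHom.map_adjoin, ← Set.range_comp]
    rfl
  have map_le : (Algebra.adjoin k (Set.range (diagonalProd 𝒜 ∘ X))).map
      (diagonalSubalgebra 𝒜).val ≤ diagonalSubalgebra 𝒜 := by
    rintro _ ⟨s, -, rfl⟩
    exact s.2
  rw [IsCompleteReduction, adjoin_eq, ← finite_inclusion_map_val_iff map_le]
  exact ⟨fun ⟨_, _, hfinite⟩ => hfinite, fun hfinite => ⟨fun i j => (X j i).2, map_le, hfinite⟩⟩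

theorem exists_eval_ne_zero_iff_isCompleteReduction_update [NeZero n]
    {X : Fin r → ∀ i, 𝒜 (Pi.single i 1)} {W : Fin e → ∀ i, 𝒜 (Pi.single i 1)}
    (hX : IsCompleteReduction k 𝒜 fun i j => (X j i : S))
    (hW : IsCompleteReduction k 𝒜 fun i h => (W h i : S)) (j₀ : Fin r) :
    ∃ f : MvPolynomial (Fin e) k, f ≠ 0 ∧ ∀ v : Fin e → k, MvPolynomial.eval v f ≠ 0 ↔
      IsCompleteReduction k 𝒜
        (fun i j => (Function.update X j₀ (∑ h, v h • W h) j i : S)) := by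
  let Y (v : Fin e → k) := diagonalProd 𝒜 (∑ h, v h • W h)
  rw [isCompleteReduction_iff_finite] at hX hW
  have range_W_subset : Set.range (diagonalProd 𝒜 ∘ W) ⊆ Set.range Y := by
    rintro _ ⟨h, rfl⟩
    exact ⟨Pi.single h 1, by simp [Y, Pi.single_apply]⟩
  have := finite_adjoin_of_subset (k := k) range_W_subset
  obtain ⟨f, hf, hfv⟩ := exists_eval_ne_zero_iff_finite_adjoin_update
    (F := diagonalProd 𝒜 ∘ X) (Y := Y) (rayGrading 𝒜 fun _ => 1) (adjoin_rayGrading_one 𝒜 _)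
    (fun j => diagonalProd_mem_rayGrading 𝒜 (X j)) j₀
    (isPolynomialMap_multilinearMap (diagonalProd 𝒜) W)
    (fun v => diagonalProd_mem_rayGrading 𝒜 _)
  refine ⟨f, hf, fun v => ?_⟩
  rw [isCompleteReduction_iff_finite, Function.comp_update]
  exact hfv v

end CompleteReductions

theorem generic_exchange_complete_reductions_general {k S : Type*} [Field k] [CommRing S]
    [Algebra k S] {n : ℕ} (𝒜 : (Fin n → ℕ) → Submodule k S) [GradedAlgebra 𝒜] {r e : ℕ}
    {x : Fin n → Fin r → S} {w : Fin n → Fin e → S} (hx : IsCompleteReduction k 𝒜 x)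
    (hw : IsCompleteReduction k 𝒜 w) (j₀ : Fin r) :
    ∃ f : MvPolynomial (Fin e) k, f ≠ 0 ∧ ∀ v : Fin e → k,
      IsCompleteReduction k 𝒜 (fun i => Function.update (x i) j₀ (∑ h, v h • w i h)) ↔
        MvPolynomial.eval v f ≠ 0 := by
  obtain rfl | hn := Nat.eq_zero_or_pos n
  · exact ⟨1, one_ne_zero, fun v => by simpa [Subsingleton.elim _ x] using hx⟩
  have : NeZero n := ⟨hn.ne'⟩
  obtain ⟨X, rfl⟩ : ∃ X : Fin r → ∀ i, 𝒜 (Pi.single i 1), x = fun i j => (X j i : S) :=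
    ⟨fun j i => ⟨x i j, hx.1 i j⟩, rfl⟩
  obtain ⟨W, rfl⟩ : ∃ W : Fin e → ∀ i, 𝒜 (Pi.single i 1), w = fun i h => (W h i : S) :=
    ⟨fun h i => ⟨w i h, hw.1 i h⟩, rfl⟩
  obtain ⟨f, hf, hfv⟩ := exists_eval_ne_zero_iff_isCompleteReduction_update hx hw j₀
  refine ⟨f, hf, fun v => ?_⟩
  rw [hfv v]
  have coe_update : (fun i j => (Function.update X j₀ (∑ h, v h • W h) j i : S)) =
      fun i => Function.update (fun j => (X j i : S)) j₀ (∑ h, v h • (W h i : S)) := by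
    ext i j
    obtain rfl | hj := eq_or_ne j j₀ <;> simp [*]
  rw [coe_update]

/-- Generic exchange for minimal complete reductions of a standard `ℕⁿ`-graded
algebra `S` over an infinite field: given two complete reductions `{x_{ij}}`
and `{w_{ij}}` of type `d = dim S^Δ ≥ 1`, there is a proper Zariski-closed set
`M ⊊ k^d` such that replacing the last column of `{x_{ij}}` with
`(Σ_h v_h w_{ih})ᵢ` yields a complete reduction iff `v ∉ M`. -/
theorem generic_exchange_complete_reductions (k S : Type*) [Field k]
    [Infinite k] [CommRing S] [Algebra k S] (n : ℕ)
    (𝒜 : (Fin n → ℕ) → Submodule k S) [GradedAlgebra 𝒜]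
    (hfg : Algebra.FiniteType k S) (h0 : 𝒜 0 = 1)
    (hstd : Algebra.adjoin k (⋃ i, (𝒜 (Pi.single i 1) : Set S)) = ⊤)
    (d : ℕ) (hd : 1 ≤ d)
    (hdim : ringKrullDim ↥(Algebra.adjoin k (𝒜 (fun _ => 1) : Set S)) = d)
    (x w : Fin n → Fin d → S)
    (hx : IsCompleteReduction k 𝒜 x) (hw : IsCompleteReduction k 𝒜 w) :
    ∃ (m : ℕ) (f : Fin m → MvPolynomial (Fin d) k),
      (∃ c : Fin d → k, ¬ ∀ i, MvPolynomial.eval c (f i) = 0) ∧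
      ∀ v : Fin d → k,
        (IsCompleteReduction k 𝒜
            (fun i j => if (j : ℕ) + 1 = d then ∑ h, v h • w i h else x i j)
          ↔ ¬ ∀ i, MvPolynomial.eval v (f i) = 0) := by
  obtain ⟨f, hf, hfv⟩ := generic_exchange_complete_reductions_general 𝒜 hx hw ⟨d - 1, by lia⟩
  obtain ⟨c, hc⟩ : ∃ c, MvPolynomial.eval c f ≠ 0 := by
    by_contra! h
    exact hf (MvPolynomial.funext (by simpa using h))
  refine ⟨1, fun _ => f, ⟨c, by simpa using hc⟩, fun v => ?_⟩
  have last_iff (j : Fin d) : j = ⟨d - 1, by lia⟩ ↔ (j : ℕ) + 1 = d := by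
    rw [Fin.ext_iff]
    lia
  have update_eq : (fun i (j : Fin d) => if (j : ℕ) + 1 = d then ∑ h, v h • w i h else x i j) =
      fun i => Function.update (x i) ⟨d - 1, by lia⟩ (∑ h, v h • w i h) := by
    ext i j
    simp [Function.update_apply, last_iff]
  simpa [update_eq] using hfv v
end
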